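/- Let Γ ⊢ Δ be a sequent of L' containing only F-propositions. If Γ ⊢ Δ has a proof in sequent calculus modulo the congruence generated by σ, then it has a proof in which all propositions occurring are F-propositions and all quantifier witnesses are F-terms of sort 0. -/

import Mathlib

/- ## Binding logic: syntax and sequent calculus -/

/-- A binding-logic language: function and predicate symbols with binding arities. -/
structure BSig where
  Fn : Type
  Pr : Type
  /-- binding arity of a function symbol -/
  far : Fn → List ℕ
  /-- binding arity of a predicate symbol -/
  par : Pr → List ℕ

/-- Terms of binding logic (α-equivalence classes, in locally nameless / de Bruijn style):
`bvar i` is a variable bound by a binder of a function symbol or by a quantifier,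
`fvar x` is a named free variable.  In `app f a`, the `i`-th argument `a i` is a term
in which `(S.far f).get i` additional variables (de Bruijn indices `0, …, kᵢ - 1`) are bound. -/
inductive Tm (S : BSig) : Type
  | bvar : ℕ → Tm S
  | fvar : ℕ → Tm S
  | app : (f : S.Fn) → (Fin (S.far f).length → Tm S) → Tm S

variable {S : BSig}

/-- `Tm.WF p t`: all de Bruijn variables of `t` are bound among the `p` ambient binders;
a *term of the language* (over named free variables) at binder depth `p`. -/
def Tm.WF : ℕ → Tm S → Prop
  | p, .bvar i => i < p
  | _, .fvar _ => True
  | p, .app f a => ∀ i, Tm.WF (p + (S.far f).get i) (a i)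

/-- Capture-avoiding substitution of the term `u` for the free variable `x`. -/
def Tm.subst (x : ℕ) (u : Tm S) : Tm S → Tm S
  | .bvar i => .bvar i
  | .fvar y => if y = x then u else .fvar y
  | .app f a => .app f (fun i => Tm.subst x u (a i))

/-- Instantiation of the bound variable `k` by the (locally closed) term `u`. -/
def Tm.openT (u : Tm S) : ℕ → Tm S → Tm S
  | k, .bvar i => if i = k then u else .bvar i
  | _, .fvar y => .fvar y
  | k, .app f a => .app f (fun i => Tm.openT u (k + (S.far f).get i) (a i))

/-- Free (named) variables of a term. -/
def Tm.fv : Tm S → Set ℕ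
  | .bvar _ => ∅
  | .fvar x => {x}
  | .app _ a => ⋃ i, (a i).fv

/-- Propositions of binding logic.  In `atom P a`, the `i`-th argument binds
`(S.par P).get i` variables; quantifiers bind one de Bruijn variable. -/
inductive Fm (S : BSig) : Type
  | atom : (P : S.Pr) → (Fin (S.par P).length → Tm S) → Fm S
  | imp : Fm S → Fm S → Fm S
  | conj : Fm S → Fm S → Fm S
  | disj : Fm S → Fm S → Fm S
  | bot : Fm S
  | all : Fm S → Fm S
  | ex : Fm S → Fm S

/-- `Fm.WF q A`: well-formedness of `A` under `q` ambient quantifiers. -/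
def Fm.WF : ℕ → Fm S → Prop
  | q, .atom P a => ∀ i, Tm.WF (q + (S.par P).get i) (a i)
  | q, .imp A B => Fm.WF q A ∧ Fm.WF q B
  | q, .conj A B => Fm.WF q A ∧ Fm.WF q B
  | q, .disj A B => Fm.WF q A ∧ Fm.WF q B
  | _, .bot => True
  | q, .all A => Fm.WF (q + 1) A
  | q, .ex A => Fm.WF (q + 1) A

/-- Free (named) variables of a proposition. -/
def Fm.fv : Fm S → Set ℕ
  | .atom _ a => ⋃ i, (a i).fv
  | .imp A B => A.fv ∪ B.fv
  | .conj A B => A.fv ∪ B.fv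
  | .disj A B => A.fv ∪ B.fv
  | .bot => ∅
  | .all A => A.fv
  | .ex A => A.fv

/-- Instantiation of the quantifier-bound variable `k` of a proposition by a term. -/
def Fm.openF (u : Tm S) : ℕ → Fm S → Fm S
  | k, .atom P a => .atom P (fun i => Tm.openT u (k + (S.par P).get i) (a i))
  | k, .imp A B => .imp (Fm.openF u k A) (Fm.openF u k B)
  | k, .conj A B => .conj (Fm.openF u k A) (Fm.openF u k B)
  | k, .disj A B => .disj (Fm.openF u k A) (Fm.openF u k B)
  | _, .bot => .bot
  | k, .all A => .all (Fm.openF u (k + 1) A)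
  | k, .ex A => .ex (Fm.openF u (k + 1) A)

/-- Capture-avoiding substitution of a term for a free variable in a proposition. -/
def Fm.subst (x : ℕ) (u : Tm S) : Fm S → Fm S
  | .atom P a => .atom P (fun i => Tm.subst x u (a i))
  | .imp A B => .imp (Fm.subst x u A) (Fm.subst x u B)
  | .conj A B => .conj (Fm.subst x u A) (Fm.subst x u B)
  | .disj A B => .disj (Fm.subst x u A) (Fm.subst x u B)
  | .bot => .bot
  | .all A => .all (Fm.subst x u A)
  | .ex A => .ex (Fm.subst x u A)

/-- Free variables of a multiset of propositions. -/
def mFv (Γ : Multiset (Fm S)) : Set ℕ := {x | ∃ A ∈ Γ, x ∈ A.fv}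

/-- The sequent calculus of binding logic: exactly the standard rules of classical
sequent calculus, with capture-avoiding substitution in the quantifier rules. -/
inductive Deriv (S : BSig) : Multiset (Fm S) → Multiset (Fm S) → Prop
  | ax (A : Fm S) : Deriv S {A} {A}
  | cut {Γ Δ : Multiset (Fm S)} {A : Fm S} :
      Deriv S (A ::ₘ Γ) Δ → Deriv S Γ (A ::ₘ Δ) → Deriv S Γ Δ
  | contrL {Γ Δ} {A : Fm S} : Deriv S (A ::ₘ A ::ₘ Γ) Δ → Deriv S (A ::ₘ Γ) Δ
  | contrR {Γ Δ} {A : Fm S} : Deriv S Γ (A ::ₘ A ::ₘ Δ) → Deriv S Γ (A ::ₘ Δ)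
  | weakL {Γ Δ} {A : Fm S} : Deriv S Γ Δ → Deriv S (A ::ₘ Γ) Δ
  | weakR {Γ Δ} {A : Fm S} : Deriv S Γ Δ → Deriv S Γ (A ::ₘ Δ)
  | impL {Γ Δ} {A B : Fm S} :
      Deriv S Γ (A ::ₘ Δ) → Deriv S (B ::ₘ Γ) Δ → Deriv S ((Fm.imp A B) ::ₘ Γ) Δ
  | impR {Γ Δ} {A B : Fm S} :
      Deriv S (A ::ₘ Γ) (B ::ₘ Δ) → Deriv S Γ ((Fm.imp A B) ::ₘ Δ)
  | conjL {Γ Δ} {A B : Fm S} :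
      Deriv S (A ::ₘ B ::ₘ Γ) Δ → Deriv S ((Fm.conj A B) ::ₘ Γ) Δ
  | conjR {Γ Δ} {A B : Fm S} :
      Deriv S Γ (A ::ₘ Δ) → Deriv S Γ (B ::ₘ Δ) → Deriv S Γ ((Fm.conj A B) ::ₘ Δ)
  | disjL {Γ Δ} {A B : Fm S} :
      Deriv S (A ::ₘ Γ) Δ → Deriv S (B ::ₘ Γ) Δ → Deriv S ((Fm.disj A B) ::ₘ Γ) Δ
  | disjR {Γ Δ} {A B : Fm S} :
      Deriv S Γ (A ::ₘ B ::ₘ Δ) → Deriv S Γ ((Fm.disj A B) ::ₘ Δ)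
  | botL {Γ Δ} : Deriv S ((Fm.bot) ::ₘ Γ) Δ
  | allL {Γ Δ} {A : Fm S} {t : Tm S} : Tm.WF 0 t →
      Deriv S ((Fm.openF t 0 A) ::ₘ Γ) Δ → Deriv S ((Fm.all A) ::ₘ Γ) Δ
  | allR {Γ Δ} {A : Fm S} {x : ℕ} :
      x ∉ mFv Γ → x ∉ mFv Δ → x ∉ A.fv →
      Deriv S Γ ((Fm.openF (Tm.fvar x) 0 A) ::ₘ Δ) → Deriv S Γ ((Fm.all A) ::ₘ Δ)
  | exL {Γ Δ} {A : Fm S} {x : ℕ} :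
      x ∉ mFv Γ → x ∉ mFv Δ → x ∉ A.fv →
      Deriv S ((Fm.openF (Tm.fvar x) 0 A) ::ₘ Γ) Δ → Deriv S ((Fm.ex A) ::ₘ Γ) Δ
  | exR {Γ Δ} {A : Fm S} {t : Tm S} : Tm.WF 0 t →
      Deriv S Γ ((Fm.openF t 0 A) ::ₘ Δ) → Deriv S Γ ((Fm.ex A) ::ₘ Δ)
/- ## The translated language L' : explicit substitutions and de Bruijn indices -/

/-- Sorts of `L'`: `tm n` for terms in a context of `n` bound variables, and
`sb n p` for explicit substitutions mapping `p` variables to terms of sort `n`. -/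
inductive Srt : Type
  | tm : ℕ → Srt
  | sb : ℕ → ℕ → Srt
deriving DecidableEq

/-- Terms of `L'`.  `evar x s` is a named variable of sort `s`; `qvar i` is a
(formula-level) de Bruijn variable bound by a quantifier; `idx i n` is the de Bruijn
constant `iₙ` (`1 ≤ i ≤ n`); `fa f p a` is `fₚ(a)`; `sub t s` is `t[s]`;
`eid n`, `cons`, `up n`, `comp` are `idₙ`, cons `.`, `↑ₙ` and composition `∘`. -/
inductive ETm (S : BSig) : Type
  | evar : ℕ → Srt → ETm S
  | qvar : ℕ → ETm S
  | idx : ℕ → ℕ → ETm S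
  | fa : (f : S.Fn) → ℕ → (Fin (S.far f).length → ETm S) → ETm S
  | sub : ETm S → ETm S → ETm S
  | eid : ℕ → ETm S
  | cons : ETm S → ETm S → ETm S
  | up : ℕ → ETm S
  | comp : ETm S → ETm S → ETm S

variable {S : BSig}

/-- The iterated shift `↑^k` out of context `p`:
`↑_p ∘ (↑_{p+1} ∘ ⋯ ∘ ↑_{p+k-1})`, of sort `⟨p+k, p⟩` (`id_p` for `k = 0`). -/
def upChain (S : BSig) (p : ℕ) : ℕ → ETm S
  | 0 => .eid p
  | 1 => .up p
  | k + 2 => .comp (.up p) (upChain S (p + 1) (k + 1))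

/-- Sorting judgment for `L'`; `Θ` gives the sorts of the quantifier-bound variables. -/
inductive HasSort : List Srt → ETm S → Srt → Prop
  | evar {Θ x s} : HasSort Θ (.evar x s) s
  | qvar {Θ i s} : Θ[i]? = some s → HasSort Θ (.qvar i) s
  | idx {Θ i n} : 1 ≤ i → i ≤ n → HasSort Θ (.idx i n) (.tm n)
  | fa {Θ} {f : S.Fn} {p : ℕ} {a : Fin (S.far f).length → ETm S} :
      (∀ j, HasSort Θ (a j) (.tm (p + (S.far f).get j))) →
      HasSort Θ (.fa f p a) (.tm p)
  | sub {Θ t s n p} : HasSort Θ t (.tm p) → HasSort Θ s (.sb n p) →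
      HasSort Θ (.sub t s) (.tm n)
  | eid {Θ n} : HasSort Θ (.eid n) (.sb n n)
  | cons {Θ t s n p} : HasSort Θ t (.tm n) → HasSort Θ s (.sb n p) →
      HasSort Θ (.cons t s) (.sb n (p + 1))
  | up {Θ n} : HasSort Θ (.up n) (.sb (n + 1) n)
  | comp {Θ s₁ s₂ n p q} : HasSort Θ s₁ (.sb p n) → HasSort Θ s₂ (.sb q p) →
      HasSort Θ (.comp s₁ s₂) (.sb q n)

/-- The component `1[↑^j]` (of sort `q+k`, with `1` of sort `q+k-j`). -/
def shiftOne (S : BSig) (q k j : ℕ) : ETm S :=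
  if j = 0 then .idx 1 (q + k) else .sub (.idx 1 (q + k - j)) (upChain S (q + k - j) j)

/-- Auxiliary: builds `1[↑^j]. … .1[↑^{k-1}].(s ∘ ↑^k)`. -/
def liftAux (S : BSig) (q k : ℕ) (s : ETm S) : ℕ → ℕ → ETm S
  | 0, _ => .comp s (upChain S q k)
  | m + 1, j => .cons (shiftOne S q k j) (liftAux S q k s m (j + 1))

/-- The substitution `1.1[↑].….1[↑^{k−1}].(s ∘ ↑^k)` of sort `⟨q+k, p+k⟩`,
for `s` of sort `⟨q,p⟩` (just `s` when `k = 0`). -/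
def liftSub (S : BSig) (q k : ℕ) (s : ETm S) : ETm S :=
  match k with
  | 0 => s
  | k' + 1 => liftAux S q (k' + 1) s (k' + 1) 0

/-- One step of `σ`-rewriting (at the root or in any subterm). -/
inductive Rw : ETm S → ETm S → Prop
  -- the rule n+1 → 1[↑ⁿ]
  | ridx {i n : ℕ} : 1 ≤ i → i + 1 ≤ n →
      Rw (.idx (i + 1) n) (.sub (.idx 1 (n - i)) (upChain S (n - i) i))
  -- 1[t.s] → t
  | rhead {m : ℕ} {t s : ETm S} : Rw (.sub (.idx 1 m) (.cons t s)) t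
  -- t[id] → t
  | rtid {n : ℕ} {t : ETm S} : Rw (.sub t (.eid n)) t
  -- (t[s])[s'] → t[s ∘ s']
  | rclos {t s s' : ETm S} : Rw (.sub (.sub t s) s') (.sub t (.comp s s'))
  -- id ∘ s → s
  | ridl {n : ℕ} {s : ETm S} : Rw (.comp (.eid n) s) s
  -- ↑ ∘ (t.s) → s
  | rshcons {n : ℕ} {t s : ETm S} : Rw (.comp (.up n) (.cons t s)) s
  -- (s₁ ∘ s₂) ∘ s₃ → s₁ ∘ (s₂ ∘ s₃)
  | rassoc {s₁ s₂ s₃ : ETm S} : Rw (.comp (.comp s₁ s₂) s₃) (.comp s₁ (.comp s₂ s₃))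
  -- (t.s) ∘ s' → t[s'].(s ∘ s')
  | rmap {t s s' : ETm S} : Rw (.comp (.cons t s) s') (.cons (.sub t s') (.comp s s'))
  -- s ∘ id → s
  | ridr {n : ℕ} {s : ETm S} : Rw (.comp s (.eid n)) s
  -- 1.↑ → id
  | rvarsh {n : ℕ} : Rw (.cons (.idx 1 (n + 1)) (.up n)) (.eid (n + 1))
  -- 1[s].(↑ ∘ s) → s
  | rscons {m n : ℕ} {s : ETm S} : Rw (.cons (.sub (.idx 1 m) s) (.comp (.up n) s)) s
  -- fₚ(t₁,…,tₙ)[s] → f_q(t₁[1.1[↑].….1[↑^{k₁−1}].s∘↑^{k₁}], …) for s of sort ⟨q,p⟩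
  | rfa {f : S.Fn} {p q : ℕ} {a : Fin (S.far f).length → ETm S} {s : ETm S} :
      (∃ Θ, HasSort Θ s (.sb q p)) →
      Rw (.sub (.fa f p a) s)
         (.fa f q (fun i => .sub (a i) (liftSub S q ((S.far f).get i) s)))
  -- congruence: rewriting in subterms
  | cfa {f : S.Fn} {p : ℕ} {a : Fin (S.far f).length → ETm S}
      {i : Fin (S.far f).length} {t' : ETm S} :
      Rw (a i) t' → Rw (.fa f p a) (.fa f p (Function.update a i t'))
  | csub₁ {t t' s : ETm S} : Rw t t' → Rw (.sub t s) (.sub t' s)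
  | csub₂ {t s s' : ETm S} : Rw s s' → Rw (.sub t s) (.sub t s')
  | ccons₁ {t t' s : ETm S} : Rw t t' → Rw (.cons t s) (.cons t' s)
  | ccons₂ {t s s' : ETm S} : Rw s s' → Rw (.cons t s) (.cons t s')
  | ccomp₁ {t t' s : ETm S} : Rw t t' → Rw (.comp t s) (.comp t' s)
  | ccomp₂ {t s s' : ETm S} : Rw s s' → Rw (.comp t s) (.comp t s')

/-- The congruence `≡` on terms of `L'` generated by the rewrite system `σ`. -/
def TmConv (S : BSig) : ETm S → ETm S → Prop := Relation.EqvGen Rw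

/-- A term is `σ`-normal if no rewrite step applies to it. -/
def ENormal (t : ETm S) : Prop := ∀ u, ¬ Rw t u

/-- Propositions of `L'` (quantifiers bind one variable of the indicated sort,
represented by formula-level de Bruijn indices `qvar`). -/
inductive EFm (S : BSig) : Type
  | atom : (P : S.Pr) → (Fin (S.par P).length → ETm S) → EFm S
  | imp : EFm S → EFm S → EFm S
  | conj : EFm S → EFm S → EFm S
  | disj : EFm S → EFm S → EFm S
  | bot : EFm S
  | all : Srt → EFm S → EFm S
  | ex : Srt → EFm S → EFm S

/-- Replacement of the quantifier-bound variable `k` by a term (in a term of `L'`). -/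
def ETm.openE (u : ETm S) (k : ℕ) : ETm S → ETm S
  | .qvar i => if i = k then u else .qvar i
  | .evar x s => .evar x s
  | .idx i n => .idx i n
  | .fa f p a => .fa f p (fun j => ETm.openE u k (a j))
  | .sub t s => .sub (ETm.openE u k t) (ETm.openE u k s)
  | .eid n => .eid n
  | .cons t s => .cons (ETm.openE u k t) (ETm.openE u k s)
  | .up n => .up n
  | .comp t s => .comp (ETm.openE u k t) (ETm.openE u k s)

/-- Instantiation of the quantifier-bound variable `k` of a proposition of `L'`. -/
def EFm.openF (u : ETm S) : ℕ → EFm S → EFm S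
  | k, .atom P a => .atom P (fun i => ETm.openE u k (a i))
  | k, .imp A B => .imp (EFm.openF u k A) (EFm.openF u k B)
  | k, .conj A B => .conj (EFm.openF u k A) (EFm.openF u k B)
  | k, .disj A B => .disj (EFm.openF u k A) (EFm.openF u k B)
  | _, .bot => .bot
  | k, .all s A => .all s (EFm.openF u (k + 1) A)
  | k, .ex s A => .ex s (EFm.openF u (k + 1) A)

/-- Names of the free named variables of a term of `L'`. -/
def ETm.fvs : ETm S → Set ℕ
  | .evar x _ => {x}
  | .qvar _ => ∅
  | .idx _ _ => ∅
  | .fa _ _ a => ⋃ i, (a i).fvs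
  | .sub t s => t.fvs ∪ s.fvs
  | .eid _ => ∅
  | .cons t s => t.fvs ∪ s.fvs
  | .up _ => ∅
  | .comp t s => t.fvs ∪ s.fvs

/-- Names of the free named variables of a proposition of `L'`. -/
def EFm.fvs : EFm S → Set ℕ
  | .atom _ a => ⋃ i, (a i).fvs
  | .imp A B => A.fvs ∪ B.fvs
  | .conj A B => A.fvs ∪ B.fvs
  | .disj A B => A.fvs ∪ B.fvs
  | .bot => ∅
  | .all _ A => A.fvs
  | .ex _ A => A.fvs

/-- Free variables of a multiset of `L'`-propositions. -/
def mFvE (Γ : Multiset (EFm S)) : Set ℕ := {x | ∃ A ∈ Γ, x ∈ A.fvs}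

/-- The congruence on propositions of `L'` generated by `σ`
(congruent atoms have `≡`-congruent arguments). -/
inductive FConv : EFm S → EFm S → Prop
  | atom {P : S.Pr} {a b : Fin (S.par P).length → ETm S} :
      (∀ i, TmConv S (a i) (b i)) → FConv (.atom P a) (.atom P b)
  | imp {A A' B B'} : FConv A A' → FConv B B' → FConv (.imp A B) (.imp A' B')
  | conj {A A' B B'} : FConv A A' → FConv B B' → FConv (.conj A B) (.conj A' B')
  | disj {A A' B B'} : FConv A A' → FConv B B' → FConv (.disj A B) (.disj A' B')
  | bot : FConv .bot .bot
  | all {s A A'} : FConv A A' → FConv (.all s A) (.all s A')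
  | ex {s A A'} : FConv A A' → FConv (.ex s A) (.ex s A')

/-- Sequent calculus modulo a congruence `E`, with proof length recorded:
the standard classical rules, where principal formulas need only be congruent
to the displayed shape.  `DerivM E n Γ Δ` : `Γ ⊢ Δ` has a proof of length `n`. -/
inductive DerivM (E : EFm S → EFm S → Prop) : ℕ → Multiset (EFm S) → Multiset (EFm S) → Prop
  | ax {A B : EFm S} : E A B → DerivM E 1 {A} {B}
  | cut {m n Γ Δ} {A B : EFm S} : E A B →
      DerivM E m (A ::ₘ Γ) Δ → DerivM E n Γ (B ::ₘ Δ) → DerivM E (m + n + 1) Γ Δ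
  | contrL {m Γ Δ} {A B₁ B₂ : EFm S} : E A B₁ → E A B₂ →
      DerivM E m (B₁ ::ₘ B₂ ::ₘ Γ) Δ → DerivM E (m + 1) (A ::ₘ Γ) Δ
  | contrR {m Γ Δ} {A B₁ B₂ : EFm S} : E A B₁ → E A B₂ →
      DerivM E m Γ (B₁ ::ₘ B₂ ::ₘ Δ) → DerivM E (m + 1) Γ (A ::ₘ Δ)
  | weakL {m Γ Δ} {A : EFm S} : DerivM E m Γ Δ → DerivM E (m + 1) (A ::ₘ Γ) Δ
  | weakR {m Γ Δ} {A : EFm S} : DerivM E m Γ Δ → DerivM E (m + 1) Γ (A ::ₘ Δ)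
  | impL {m n Γ Δ} {C A B : EFm S} : E C (.imp A B) →
      DerivM E m Γ (A ::ₘ Δ) → DerivM E n (B ::ₘ Γ) Δ → DerivM E (m + n + 1) (C ::ₘ Γ) Δ
  | impR {m Γ Δ} {C A B : EFm S} : E C (.imp A B) →
      DerivM E m (A ::ₘ Γ) (B ::ₘ Δ) → DerivM E (m + 1) Γ (C ::ₘ Δ)
  | conjL {m Γ Δ} {C A B : EFm S} : E C (.conj A B) →
      DerivM E m (A ::ₘ B ::ₘ Γ) Δ → DerivM E (m + 1) (C ::ₘ Γ) Δ
  | conjR {m n Γ Δ} {C A B : EFm S} : E C (.conj A B) →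
      DerivM E m Γ (A ::ₘ Δ) → DerivM E n Γ (B ::ₘ Δ) → DerivM E (m + n + 1) Γ (C ::ₘ Δ)
  | disjL {m n Γ Δ} {C A B : EFm S} : E C (.disj A B) →
      DerivM E m (A ::ₘ Γ) Δ → DerivM E n (B ::ₘ Γ) Δ → DerivM E (m + n + 1) (C ::ₘ Γ) Δ
  | disjR {m Γ Δ} {C A B : EFm S} : E C (.disj A B) →
      DerivM E m Γ (A ::ₘ B ::ₘ Δ) → DerivM E (m + 1) Γ (C ::ₘ Δ)
  | botL {Γ Δ} {A : EFm S} : E A .bot → DerivM E 1 (A ::ₘ Γ) Δ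
  | allL {m Γ Δ} {B C A : EFm S} {s : Srt} {t : ETm S} :
      E B (.all s A) → E C (EFm.openF t 0 A) → HasSort [] t s →
      DerivM E m (C ::ₘ Γ) Δ → DerivM E (m + 1) (B ::ₘ Γ) Δ
  | allR {m Γ Δ} {B A : EFm S} {s : Srt} {x : ℕ} :
      E B (.all s A) → x ∉ mFvE Γ → x ∉ mFvE Δ → x ∉ A.fvs →
      DerivM E m Γ ((EFm.openF (.evar x s) 0 A) ::ₘ Δ) → DerivM E (m + 1) Γ (B ::ₘ Δ)
  | exL {m Γ Δ} {B A : EFm S} {s : Srt} {x : ℕ} :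
      E B (.ex s A) → x ∉ mFvE Γ → x ∉ mFvE Δ → x ∉ A.fvs →
      DerivM E m ((EFm.openF (.evar x s) 0 A) ::ₘ Γ) Δ → DerivM E (m + 1) (B ::ₘ Γ) Δ
  | exR {m Γ Δ} {B C A : EFm S} {s : Srt} {t : ETm S} :
      E B (.ex s A) → E C (EFm.openF t 0 A) → HasSort [] t s →
      DerivM E m Γ (C ::ₘ Δ) → DerivM E (m + 1) Γ (B ::ₘ Δ)

/-- Provability in sequent calculus modulo the congruence `E`. -/
def DerivMod (E : EFm S → EFm S → Prop) (Γ Δ : Multiset (EFm S)) : Prop :=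
  ∃ n, DerivM E n Γ Δ

/- ## Pre-cooking : the translation from L to L' -/

/-- Pre-cooking of a term at binder depth `p` (the length of the list `l` of
bound variables): binder-bound variables become de Bruijn constants, other
variables are protected by the shift `↑^p`. -/
def Ft (S : BSig) : (p : ℕ) → Tm S → ETm S
  | p, .bvar i =>
      if i < p then .idx (i + 1) p
      else if p = 0 then .qvar (i - p) else .sub (.qvar (i - p)) (upChain S 0 p)
  | p, .fvar x =>
      if p = 0 then .evar x (.tm 0) else .sub (.evar x (.tm 0)) (upChain S 0 p)
  | p, .app f a => .fa f p (fun i => Ft S (p + (S.far f).get i) (a i))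

/-- Pre-cooking of a proposition: `A' = F(A, ε)`. -/
def Ff (S : BSig) : Fm S → EFm S
  | .atom P a => .atom P (fun i => Ft S ((S.par P).get i) (a i))
  | .imp A B => .imp (Ff S A) (Ff S B)
  | .conj A B => .conj (Ff S A) (Ff S B)
  | .disj A B => .disj (Ff S A) (Ff S B)
  | .bot => .bot
  | .all A => .all (.tm 0) (Ff S A)
  | .ex A => .ex (.tm 0) (Ff S A)

/-- Grafting `⟨v/x⟩t` in `L'`: textual replacement of the (sort-0) variable `x` by `v`. -/
def ETm.graft (x : ℕ) (v : ETm S) : ETm S → ETm S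
  | .evar y s => if y = x ∧ s = .tm 0 then v else .evar y s
  | .qvar i => .qvar i
  | .idx i n => .idx i n
  | .fa f p a => .fa f p (fun j => ETm.graft x v (a j))
  | .sub t s => .sub (ETm.graft x v t) (ETm.graft x v s)
  | .eid n => .eid n
  | .cons t s => .cons (ETm.graft x v t) (ETm.graft x v s)
  | .up n => .up n
  | .comp t s => .comp (ETm.graft x v t) (ETm.graft x v s)

/-- Substitution `(v/x)A` of a (quantifier-closed) term for a variable in a
proposition of `L'` (capture-avoiding, since terms of `L'` have no binders). -/
def EFm.graft (x : ℕ) (v : ETm S) : EFm S → EFm S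
  | .atom P a => .atom P (fun i => ETm.graft x v (a i))
  | .imp A B => .imp (EFm.graft x v A) (EFm.graft x v B)
  | .conj A B => .conj (EFm.graft x v A) (EFm.graft x v B)
  | .disj A B => .disj (EFm.graft x v A) (EFm.graft x v B)
  | .bot => .bot
  | .all s A => .all s (EFm.graft x v A)
  | .ex s A => .ex s (EFm.graft x v A)

/- ## F-terms and F-propositions -/

/-- All named variables occurring in the term have sort `0`. -/
def ETm.vars0 : ETm S → Prop
  | .evar _ s => s = .tm 0
  | .qvar _ => True
  | .idx _ _ => True
  | .fa _ _ a => ∀ i, (a i).vars0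
  | .sub t s => t.vars0 ∧ s.vars0
  | .eid _ => True
  | .cons t s => t.vars0 ∧ s.vars0
  | .up _ => True
  | .comp t s => t.vars0 ∧ s.vars0

/-- All named variables of the proposition have sort `0`, and all its
quantifiers bind variables of sort `0`. -/
def EFm.vars0F : EFm S → Prop
  | .atom _ a => ∀ i, (a i).vars0
  | .imp A B => A.vars0F ∧ B.vars0F
  | .conj A B => A.vars0F ∧ B.vars0F
  | .disj A B => A.vars0F ∧ B.vars0F
  | .bot => True
  | .all s A => s = .tm 0 ∧ A.vars0F
  | .ex s A => s = .tm 0 ∧ A.vars0F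

/-- The proposition is `σ`-normal: every term occurring in it is `σ`-normal. -/
def EFm.TmsNormal : EFm S → Prop
  | .atom _ a => ∀ i, ENormal (a i)
  | .imp A B => A.TmsNormal ∧ B.TmsNormal
  | .conj A B => A.TmsNormal ∧ B.TmsNormal
  | .disj A B => A.TmsNormal ∧ B.TmsNormal
  | .bot => True
  | .all _ A => A.TmsNormal
  | .ex _ A => A.TmsNormal

/-- Well-sortedness of a proposition of `L'` in a context `Θ` of quantified sorts. -/
def EFmSorted : List Srt → EFm S → Prop
  | Θ, .atom P a => ∀ i, HasSort Θ (a i) (.tm ((S.par P).get i))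
  | Θ, .imp A B => EFmSorted Θ A ∧ EFmSorted Θ B
  | Θ, .conj A B => EFmSorted Θ A ∧ EFmSorted Θ B
  | Θ, .disj A B => EFmSorted Θ A ∧ EFmSorted Θ B
  | _, .bot => True
  | Θ, .all s A => EFmSorted (s :: Θ) A
  | Θ, .ex s A => EFmSorted (s :: Θ) A

/-- An F-proposition: a `σ`-normal, well-sorted proposition of `L'` containing
only variables of sort `0`. -/
def FProp (A : EFm S) : Prop := A.TmsNormal ∧ A.vars0F ∧ EFmSorted [] A

/-- An F-term of sort `0`: a `σ`-normal, well-sorted term of sort `0` of `L'`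
containing only variables of sort `0`. -/
def FTerm0 (t : ETm S) : Prop := ENormal t ∧ t.vars0 ∧ HasSort [] t (.tm 0)
/- ## Restricted proofs: every proposition occurring satisfies `TF`,
every quantifier witness satisfies `TT`. -/

variable {S' : BSig}

/-- All members of a multiset satisfy `TF`. -/
def AllTF {S : BSig} (TF : EFm S → Prop) (Γ : Multiset (EFm S)) : Prop := ∀ X ∈ Γ, TF X

/-- Sequent calculus modulo `E` in which every proposition occurring in the proof
satisfies `TF` and every witness of a `∀`-left or `∃`-right rule satisfies `TT`. -/
inductive DerivR {S : BSig} (E : EFm S → EFm S → Prop) (TF : EFm S → Prop) (TT : ETm S → Prop) :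
    Multiset (EFm S) → Multiset (EFm S) → Prop
  | ax {A B : EFm S} : TF A → TF B → E A B → DerivR E TF TT {A} {B}
  | cut {Γ Δ} {A B : EFm S} : AllTF TF Γ → AllTF TF Δ → TF A → TF B → E A B →
      DerivR E TF TT (A ::ₘ Γ) Δ → DerivR E TF TT Γ (B ::ₘ Δ) → DerivR E TF TT Γ Δ
  | contrL {Γ Δ} {A B₁ B₂ : EFm S} : AllTF TF (A ::ₘ Γ) → AllTF TF Δ →
      TF B₁ → TF B₂ → E A B₁ → E A B₂ →
      DerivR E TF TT (B₁ ::ₘ B₂ ::ₘ Γ) Δ → DerivR E TF TT (A ::ₘ Γ) Δ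
  | contrR {Γ Δ} {A B₁ B₂ : EFm S} : AllTF TF Γ → AllTF TF (A ::ₘ Δ) →
      TF B₁ → TF B₂ → E A B₁ → E A B₂ →
      DerivR E TF TT Γ (B₁ ::ₘ B₂ ::ₘ Δ) → DerivR E TF TT Γ (A ::ₘ Δ)
  | weakL {Γ Δ} {A : EFm S} : AllTF TF (A ::ₘ Γ) → AllTF TF Δ →
      DerivR E TF TT Γ Δ → DerivR E TF TT (A ::ₘ Γ) Δ
  | weakR {Γ Δ} {A : EFm S} : AllTF TF Γ → AllTF TF (A ::ₘ Δ) →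
      DerivR E TF TT Γ Δ → DerivR E TF TT Γ (A ::ₘ Δ)
  | impL {Γ Δ} {C A B : EFm S} : AllTF TF (C ::ₘ Γ) → AllTF TF Δ → TF A → TF B →
      E C (.imp A B) →
      DerivR E TF TT Γ (A ::ₘ Δ) → DerivR E TF TT (B ::ₘ Γ) Δ → DerivR E TF TT (C ::ₘ Γ) Δ
  | impR {Γ Δ} {C A B : EFm S} : AllTF TF Γ → AllTF TF (C ::ₘ Δ) → TF A → TF B →
      E C (.imp A B) →
      DerivR E TF TT (A ::ₘ Γ) (B ::ₘ Δ) → DerivR E TF TT Γ (C ::ₘ Δ)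
  | conjL {Γ Δ} {C A B : EFm S} : AllTF TF (C ::ₘ Γ) → AllTF TF Δ → TF A → TF B →
      E C (.conj A B) →
      DerivR E TF TT (A ::ₘ B ::ₘ Γ) Δ → DerivR E TF TT (C ::ₘ Γ) Δ
  | conjR {Γ Δ} {C A B : EFm S} : AllTF TF Γ → AllTF TF (C ::ₘ Δ) → TF A → TF B →
      E C (.conj A B) →
      DerivR E TF TT Γ (A ::ₘ Δ) → DerivR E TF TT Γ (B ::ₘ Δ) → DerivR E TF TT Γ (C ::ₘ Δ)
  | disjL {Γ Δ} {C A B : EFm S} : AllTF TF (C ::ₘ Γ) → AllTF TF Δ → TF A → TF B →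
      E C (.disj A B) →
      DerivR E TF TT (A ::ₘ Γ) Δ → DerivR E TF TT (B ::ₘ Γ) Δ → DerivR E TF TT (C ::ₘ Γ) Δ
  | disjR {Γ Δ} {C A B : EFm S} : AllTF TF Γ → AllTF TF (C ::ₘ Δ) → TF A → TF B →
      E C (.disj A B) →
      DerivR E TF TT Γ (A ::ₘ B ::ₘ Δ) → DerivR E TF TT Γ (C ::ₘ Δ)
  | botL {Γ Δ} {A : EFm S} : AllTF TF (A ::ₘ Γ) → AllTF TF Δ → E A .bot →
      DerivR E TF TT (A ::ₘ Γ) Δ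
  | allL {Γ Δ} {B C A : EFm S} {s : Srt} {t : ETm S} :
      AllTF TF (B ::ₘ Γ) → AllTF TF Δ → TF C → TT t →
      E B (.all s A) → E C (EFm.openF t 0 A) → HasSort [] t s →
      DerivR E TF TT (C ::ₘ Γ) Δ → DerivR E TF TT (B ::ₘ Γ) Δ
  | allR {Γ Δ} {B A : EFm S} {s : Srt} {x : ℕ} :
      AllTF TF Γ → AllTF TF (B ::ₘ Δ) → TF (EFm.openF (.evar x s) 0 A) →
      E B (.all s A) → x ∉ mFvE Γ → x ∉ mFvE Δ → x ∉ A.fvs →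
      DerivR E TF TT Γ ((EFm.openF (.evar x s) 0 A) ::ₘ Δ) → DerivR E TF TT Γ (B ::ₘ Δ)
  | exL {Γ Δ} {B A : EFm S} {s : Srt} {x : ℕ} :
      AllTF TF (B ::ₘ Γ) → AllTF TF Δ → TF (EFm.openF (.evar x s) 0 A) →
      E B (.ex s A) → x ∉ mFvE Γ → x ∉ mFvE Δ → x ∉ A.fvs →
      DerivR E TF TT ((EFm.openF (.evar x s) 0 A) ::ₘ Γ) Δ → DerivR E TF TT (B ::ₘ Γ) Δ
  | exR {Γ Δ} {B C A : EFm S} {s : Srt} {t : ETm S} :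
      AllTF TF Γ → AllTF TF (B ::ₘ Δ) → TF C → TT t →
      E B (.ex s A) → E C (EFm.openF t 0 A) → HasSort [] t s →
      DerivR E TF TT Γ (C ::ₘ Δ) → DerivR E TF TT Γ (B ::ₘ Δ)

/-!
Instead of transforming proofs, one shows completeness of the restricted proofs for a Boolean-valued
semantics in which `σ` holds.

Terms are interpreted in an untyped normalization-by-evaluation model, where the two sides of every
rule of `σ` have the same denotation.  A denotation can be read back as a `σ`-normal term, and a
logical relation shows that the term obtained is congruent to the original one.  A variable of a
substitution sort is interpreted by the denotation of a substitution with variables of sort `0`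
only.  So every domain consists of denotations of such terms, and that of sort `0` consists of
denotations of F-terms.

The conditions are the sequents of F-propositions that have no restricted proof, ordered by
inclusion, and the truth value of an F-proposition `A` is the set of the conditions `Γ ⊢ Δ` such
that `Γ ⊢ A, Δ` has a restricted proof.  Since cut is a rule, these sets are regular and commute
with the connectives and the quantifiers.  If `Γ ⊢ Δ` were itself a condition, it would lie in the
truth values of all members of `Γ` and in the complements of those of all members of `Δ`, and the
sequent would not be valid.
-/

section Convertibility

theorem TmConv.refl (a : ETm S) : TmConv S a a := Relation.EqvGen.refl a

theorem TmConv.of_eq {a b : ETm S} (h : a = b) : TmConv S a b := h ▸ TmConv.refl a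

theorem TmConv.symm {a b : ETm S} (h : TmConv S a b) : TmConv S b a := Relation.EqvGen.symm _ _ h

theorem TmConv.trans {a b c : ETm S} (h : TmConv S a b) (h' : TmConv S b c) : TmConv S a c :=
  Relation.EqvGen.trans _ _ _ h h'

instance TmConv.instTrans : Trans (TmConv S) (TmConv S) (TmConv S) := ⟨TmConv.trans⟩

theorem Rw.conv {a b : ETm S} (h : Rw a b) : TmConv S a b := .rel _ _ h

theorem TmConv.map {F : ETm S → ETm S} (hF : ∀ a b, Rw a b → Rw (F a) (F b)) {a b : ETm S}
    (h : TmConv S a b) : TmConv S (F a) (F b) := by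
  induction h with
  | rel _ _ h => exact (hF _ _ h).conv
  | refl => exact .refl _
  | symm _ _ _ ih => exact ih.symm
  | trans _ _ _ _ _ ih₁ ih₂ => exact ih₁.trans ih₂

theorem TmConv.sub {a a' s s' : ETm S} (h : TmConv S a a') (h' : TmConv S s s') :
    TmConv S (.sub a s) (.sub a' s') :=
  (h.map (F := (ETm.sub · s)) fun _ _ => .csub₁).trans (h'.map fun _ _ => .csub₂)

theorem TmConv.cons {a a' s s' : ETm S} (h : TmConv S a a') (h' : TmConv S s s') :
    TmConv S (.cons a s) (.cons a' s') :=
  (h.map (F := (ETm.cons · s)) fun _ _ => .ccons₁).trans (h'.map fun _ _ => .ccons₂)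

theorem TmConv.comp {r r' s s' : ETm S} (h : TmConv S r r') (h' : TmConv S s s') :
    TmConv S (.comp r s) (.comp r' s') :=
  (h.map (F := (ETm.comp · s)) fun _ _ => .ccomp₁).trans (h'.map fun _ _ => .ccomp₂)

theorem TmConv.fa_update {f : S.Fn} {p : ℕ} (a : Fin (S.far f).length → ETm S)
    {i : Fin (S.far f).length} {t u : ETm S} (h : TmConv S t u) :
    TmConv S (.fa f p (Function.update a i t)) (.fa f p (Function.update a i u)) :=
  h.map (F := fun v => .fa f p (Function.update a i v)) fun v w hvw => by
    simpa only [Function.update_idem] using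
      Rw.cfa (a := Function.update a i v) (i := i) (by rwa [Function.update_self])

theorem TmConv.fa {f : S.Fn} {p : ℕ} {a b : Fin (S.far f).length → ETm S}
    (h : ∀ i, TmConv S (a i) (b i)) : TmConv S (.fa f p a) (.fa f p b) := by
  classical
  suffices ∀ J : Finset (Fin (S.far f).length),
      TmConv S (.fa f p a) (.fa f p (J.piecewise b a)) by
    simpa only [Finset.piecewise_univ] using this Finset.univ
  intro J
  induction J using Finset.induction_on with
  | empty => exact .of_eq (by rw [Finset.piecewise_empty])
  | insert i J hi ih =>
    have hJ : J.piecewise b a = Function.update (J.piecewise b a) i (a i) :=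
      (Function.update_eq_self_iff.2 (Finset.piecewise_eq_of_notMem J b a hi).symm).symm
    rw [Finset.piecewise_insert]
    refine ih.trans ?_
    nth_rw 1 [hJ]
    exact (h i).fa_update _

theorem upChain_succ (p k : ℕ) :
    TmConv S (upChain S p (k + 1)) (.comp (upChain S p k) (.up (p + k))) := by
  induction k generalizing p with
  | zero => exact Rw.ridl.conv.symm
  | succ k ih =>
    have ih : TmConv S (upChain S (p + 1) (k + 1))
        (.comp (upChain S (p + 1) k) (.up (p + (k + 1)))) := by
      simpa only [Nat.add_right_comm, Nat.add_assoc] using ih (p + 1)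
    cases k with
    | zero => exact .comp (.refl _) (ih.trans Rw.ridl.conv)
    | succ k => exact (TmConv.comp (.refl _) ih).trans Rw.rassoc.conv.symm

theorem upChain_add (p k l : ℕ) :
    TmConv S (.comp (upChain S p k) (upChain S (p + k) l)) (upChain S p (k + l)) := by
  induction l with
  | zero => exact Rw.ridr.conv
  | succ l ih =>
    have hsucc := upChain_succ (S := S) p (k + l)
    rw [← Nat.add_assoc] at hsucc
    exact (TmConv.comp (.refl _) (upChain_succ _ _)).trans
      (Rw.rassoc.conv.symm.trans ((ih.comp (.refl _)).trans hsucc.symm))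

theorem upChain_sort (Θ : List Srt) (p k : ℕ) : HasSort Θ (upChain S p k) (.sb (p + k) p) := by
  fun_induction upChain S p k with
  | case1 => exact .eid
  | case2 => exact .up
  | case3 p k ih =>
    exact .comp .up (by simpa only [Nat.add_right_comm p 1, Nat.add_assoc p] using ih)

/-- The term `t[↑^k]` for `t` of sort `p`, written `t` when `k = 0` so that it is normal whenever
`t` is a variable or a constant `1ₚ`. -/
def ETm.shift (t : ETm S) (p k : ℕ) : ETm S := if k = 0 then t else .sub t (upChain S p k)

theorem shift_conv (t : ETm S) (p k : ℕ) : TmConv S (t.shift p k) (.sub t (upChain S p k)) := by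
  cases k with
  | zero => exact Rw.rtid.conv.symm
  | succ k => exact .refl _

theorem shift_sort {Θ : List Srt} {t : ETm S} {p : ℕ} (h : HasSort Θ t (.tm p)) (k : ℕ) :
    HasSort Θ (t.shift p k) (.tm (p + k)) := by
  cases k with
  | zero => exact h
  | succ k => exact .sub h (upChain_sort _ _ _)

theorem shiftOne_eq_shift (q k j : ℕ) :
    shiftOne S q k j = ETm.shift (.idx 1 (q + k - j)) (q + k - j) j := by
  cases j <;> rfl

theorem shiftOne_up {q k j : ℕ} (h : j ≤ k) :
    TmConv S (.sub (shiftOne S q k j) (.up (q + k))) (shiftOne S q (k + 1) (j + 1)) := by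
  have hsucc := (upChain_succ (S := S) (q + k - j) j).symm
  rw [Nat.sub_add_cancel (by omega)] at hsucc
  have hj : q + (k + 1) - (j + 1) = q + k - j := by omega
  simp only [shiftOne_eq_shift, hj]
  calc TmConv S _ (.sub (.sub _ (upChain S (q + k - j) j)) _) := (shift_conv _ _ _).sub (.refl _)
    TmConv S _ (.sub _ (.comp _ _)) := Rw.rclos.conv
    TmConv S _ (.sub _ (upChain S _ (j + 1))) := .sub (.refl _) hsucc

theorem liftAux_up (q : ℕ) (s : ETm S) (m j : ℕ) :
    TmConv S (.comp (liftAux S q (m + j) s m j) (.up (q + (m + j))))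
      (liftAux S q (m + j + 1) s m (j + 1)) := by
  suffices ∀ k, k = m + j → TmConv S (.comp (liftAux S q k s m j) (.up (q + k)))
      (liftAux S q (k + 1) s m (j + 1)) from this _ rfl
  intro k hk
  induction m generalizing j with
  | zero => exact Rw.rassoc.conv.trans (.comp (.refl _) (upChain_succ q k).symm)
  | succ m ih => exact Rw.rmap.conv.trans (.cons (shiftOne_up (by omega)) (ih (j + 1) (by omega)))

theorem liftSub_succ (q k : ℕ) (s : ETm S) :
    TmConv S (liftSub S q (k + 1) s)
      (.cons (.idx 1 (q + k + 1)) (.comp (liftSub S q k s) (.up (q + k)))) := by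
  refine .cons (.refl _) ((liftAux_up q s k 0).symm.trans (.comp ?_ (.refl _)))
  cases k with
  | zero => exact Rw.ridr.conv
  | succ k => exact .refl _

theorem liftAux_sort {Θ : List Srt} {q p k : ℕ} {s : ETm S} (h : HasSort Θ s (.sb q p)) (m j : ℕ)
    (hk : m + j = k) : HasSort Θ (liftAux S q k s m j) (.sb (q + k) (p + m)) := by
  induction m generalizing j with
  | zero => exact .comp h (upChain_sort _ _ _)
  | succ m ih =>
    refine .cons ?_ (ih (j + 1) (by omega))
    have hone := shift_sort (S := S) (Θ := Θ) (.idx (le_refl 1) (by omega : 1 ≤ q + k - j)) j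
    rwa [Nat.sub_add_cancel (by omega), ← shiftOne_eq_shift] at hone

theorem liftSub_sort {Θ : List Srt} {q p : ℕ} {s : ETm S} (h : HasSort Θ s (.sb q p)) (k : ℕ) :
    HasSort Θ (liftSub S q k s) (.sb (q + k) (p + k)) := by
  cases k with
  | zero => exact h
  | succ k => exact liftAux_sort h _ _ rfl

end Convertibility

section Instantiation

theorem FConv.refl (A : EFm S) : FConv A A := by
  induction A with
  | atom P a => exact .atom fun _ => .refl _
  | bot => exact .bot
  | imp A B ihA ihB => exact .imp ihA ihB
  | conj A B ihA ihB => exact .conj ihA ihB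
  | disj A B ihA ihB => exact .disj ihA ihB
  | all s A ih => exact .all ih
  | ex s A ih => exact .ex ih

theorem FConv.symm {A B : EFm S} (h : FConv A B) : FConv B A := by
  induction h with
  | atom h => exact .atom fun i => (h i).symm
  | bot => exact .bot
  | imp _ _ ihA ihB => exact .imp ihA ihB
  | conj _ _ ihA ihB => exact .conj ihA ihB
  | disj _ _ ihA ihB => exact .disj ihA ihB
  | all _ ih => exact .all ih
  | ex _ ih => exact .ex ih

variable {Θ : List Srt} {s s₀ : Srt} {t u : ETm S}

theorem HasSort.of_nil (h : HasSort [] t s) (Θ : List Srt) : HasSort Θ t s := by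
  induction h with
  | evar => exact .evar
  | qvar hi => cases hi
  | idx h₁ h₂ => exact .idx h₁ h₂
  | fa _ ih => exact .fa ih
  | sub _ _ ih₁ ih₂ => exact .sub ih₁ ih₂
  | eid => exact .eid
  | cons _ _ ih₁ ih₂ => exact .cons ih₁ ih₂
  | up => exact .up
  | comp _ _ ih₁ ih₂ => exact .comp ih₁ ih₂

theorem HasSort.openE (h : HasSort (Θ ++ [s₀]) t s) (hu : HasSort [] u s₀) :
    HasSort Θ (ETm.openE u Θ.length t) s := by
  induction h with
  | evar => exact .evar
  | @qvar i s hi =>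
    rw [ETm.openE]
    split_ifs with hk
    · subst hk
      rw [List.getElem?_concat_length, Option.some_inj] at hi
      exact hi ▸ hu.of_nil Θ
    · have hlt := (List.getElem?_eq_some_iff.1 hi).1
      rw [List.length_append, List.length_singleton] at hlt
      exact .qvar (by rwa [List.getElem?_append_left (by omega)] at hi)
  | idx h₁ h₂ => exact .idx h₁ h₂
  | fa _ ih => exact .fa ih
  | sub _ _ ih₁ ih₂ => exact .sub ih₁ ih₂
  | eid => exact .eid
  | cons _ _ ih₁ ih₂ => exact .cons ih₁ ih₂
  | up => exact .up
  | comp _ _ ih₁ ih₂ => exact .comp ih₁ ih₂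

theorem EFmSorted.openF {A : EFm S} (h : EFmSorted (Θ ++ [s₀]) A) (hu : HasSort [] u s₀) :
    EFmSorted Θ (EFm.openF u Θ.length A) := by
  induction A generalizing Θ with
  | atom P a => exact fun i => (h i).openE hu
  | bot => trivial
  | imp A B ihA ihB | conj A B ihA ihB | disj A B ihA ihB => exact ⟨ihA h.1, ihB h.2⟩
  | all s A ih | ex s A ih => exact ih (Θ := s :: Θ) h

theorem vars0_openE (ht : t.vars0) (hu : u.vars0) (k : ℕ) : (ETm.openE u k t).vars0 := by
  induction t with
  | qvar i =>
    rw [ETm.openE]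
    split_ifs
    exacts [hu, trivial]
  | fa f p a ih => exact fun j => ih j (ht j)
  | sub t s iht ihs | cons t s iht ihs | comp t s iht ihs => exact ⟨iht ht.1, ihs ht.2⟩
  | evar | idx | eid | up => exact ht

theorem vars0F_openF {A : EFm S} (hA : A.vars0F) (hu : u.vars0) (k : ℕ) :
    (EFm.openF u k A).vars0F := by
  induction A generalizing k with
  | atom P a => exact fun i => vars0_openE (hA i) hu k
  | bot => trivial
  | imp A B ihA ihB | conj A B ihA ihB | disj A B ihA ihB => exact ⟨ihA hA.1 k, ihB hA.2 k⟩
  | all s A ih | ex s A ih => exact ⟨hA.1, ih hA.2 (k + 1)⟩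

/-- The number of logical symbols of a proposition. -/
def EFm.size : EFm S → ℕ
  | .atom _ _ => 0
  | .imp A B => A.size + B.size + 1
  | .conj A B => A.size + B.size + 1
  | .disj A B => A.size + B.size + 1
  | .bot => 0
  | .all _ A => A.size + 1
  | .ex _ A => A.size + 1

theorem EFm.size_openF (u : ETm S) (k : ℕ) (A : EFm S) : (EFm.openF u k A).size = A.size := by
  induction A generalizing k with
  | atom | bot => rfl
  | imp A B ihA ihB | conj A B ihA ihB | disj A B ihA ihB => simp only [openF, size, ihA, ihB]
  | all s A ih | ex s A ih => simp only [openF, size, ih]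

end Instantiation

section NormalForms

theorem upChain_succ_ne_eid (p k n : ℕ) : upChain S p (k + 1) ≠ .eid n := by
  cases k <;> simp [upChain]

theorem upChain_succ_ne_cons (p k : ℕ) (t s : ETm S) : upChain S p (k + 1) ≠ .cons t s := by
  cases k <;> simp [upChain]

theorem upChain_succ_normal (p k : ℕ) : ENormal (upChain S p (k + 1)) := by
  induction k generalizing p with
  | zero => rintro u ⟨⟩
  | succ k ih =>
    intro u h
    have htail_normal := ih (p + 1)
    generalize htail : upChain S (p + 1) (k + 1) = s at htail_normal
    rw [upChain, htail] at h
    cases h with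
    | rshcons => exact upChain_succ_ne_cons _ _ _ _ htail
    | ridr => exact upChain_succ_ne_eid _ _ _ htail
    | ccomp₁ h => cases h
    | ccomp₂ h => exact htail_normal _ h

theorem ENormal.shift {t : ETm S} (ht : ENormal t) (hsub : ∀ a s, t ≠ .sub a s)
    (hfa : ∀ f q a, t ≠ .fa f q a) (p k : ℕ) : ENormal (t.shift p k) := by
  cases k with
  | zero => exact ht
  | succ k =>
    have hnormal := upChain_succ_normal (S := S) p k
    change ENormal (.sub t (upChain S p (k + 1)))
    generalize hs : upChain S p (k + 1) = s at hnormal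
    intro u h
    cases h with
    | rhead => exact upChain_succ_ne_cons _ _ _ _ hs
    | rtid => exact upChain_succ_ne_eid _ _ _ hs
    | rclos => exact hsub _ _ rfl
    | rfa => exact hfa _ _ _ rfl
    | csub₁ h => exact ht _ h
    | csub₂ h => exact hnormal _ h

/-- Terms of sort `n` all of whose variables have sort `0`, built from `fₚ` and shifted variables
and constants, with quantified variables among the first `m`. -/
inductive IsNormalForm (m : ℕ) : ℕ → ETm S → Prop
  | idx {l n : ℕ} : l < n → IsNormalForm m n (ETm.shift (.idx 1 (l + 1)) (l + 1) (n - (l + 1)))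
  | evar (x n : ℕ) : IsNormalForm m n (ETm.shift (.evar x (.tm 0)) 0 n)
  | qvar {i : ℕ} (n : ℕ) : i < m → IsNormalForm m n (ETm.shift (.qvar i) 0 n)
  | fa {f : S.Fn} {n : ℕ} {a : Fin (S.far f).length → ETm S} :
      (∀ j, IsNormalForm m (n + (S.far f).get j) (a j)) → IsNormalForm m n (.fa f n a)

theorem IsNormalForm.normal {m n : ℕ} {t : ETm S} (h : IsNormalForm m n t) : ENormal t := by
  induction h with
  | idx => exact ENormal.shift (by rintro u ⟨⟩; omega) (by simp) (by simp) _ _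
  | evar => exact ENormal.shift (by rintro u ⟨⟩) (by simp) (by simp) _ _
  | qvar => exact ENormal.shift (by rintro u ⟨⟩) (by simp) (by simp) _ _
  | fa _ ih =>
    rintro u (_ | _)
    exact ih _ _ ‹_›

theorem IsNormalForm.hasSort {m n : ℕ} {t : ETm S} (h : IsNormalForm m n t) :
    HasSort (List.replicate m (.tm 0)) t (.tm n) := by
  induction h with
  | @idx l n hl =>
    have hsort := shift_sort (S := S) (Θ := List.replicate m (.tm 0))
      (.idx (le_refl 1) (by omega : 1 ≤ l + 1)) (n - (l + 1))
    rwa [Nat.add_sub_cancel' hl] at hsort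
  | evar x n => simpa only [Nat.zero_add] using shift_sort (p := 0) .evar n
  | qvar n hi =>
    simpa only [Nat.zero_add] using
      shift_sort (p := 0) (.qvar (List.getElem?_replicate_of_lt hi)) n
  | fa _ ih => exact .fa ih

theorem vars0_upChain (p k : ℕ) : (upChain S p k).vars0 := by
  fun_induction upChain S p k with
  | case1 => trivial
  | case2 => trivial
  | case3 p k ih => exact ⟨trivial, ih⟩

theorem vars0_shift {t : ETm S} (h : t.vars0) (p k : ℕ) : (t.shift p k).vars0 := by
  cases k with
  | zero => exact h
  | succ k => exact ⟨h, vars0_upChain _ _⟩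

theorem IsNormalForm.vars0 {m n : ℕ} {t : ETm S} (h : IsNormalForm m n t) : t.vars0 := by
  induction h with
  | idx => exact vars0_shift (by trivial) _ _
  | evar => exact vars0_shift (by rfl) _ _
  | qvar => exact vars0_shift (by trivial) _ _
  | fa _ ih => exact ih

theorem openE_upChain (u : ETm S) (i p k : ℕ) : ETm.openE u i (upChain S p k) = upChain S p k := by
  fun_induction upChain S p k with
  | case1 => rfl
  | case2 => rfl
  | case3 p k ih => rw [ETm.openE, ih, ETm.openE]

theorem openE_shift (u : ETm S) (i : ℕ) (t : ETm S) (p k : ℕ) :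
    ETm.openE u i (t.shift p k) = (ETm.openE u i t).shift p k := by
  cases k with
  | zero => rfl
  | succ k => exact congrArg (ETm.sub _) (openE_upChain _ _ _ _)

theorem IsNormalForm.openE_evar {m n : ℕ} {t : ETm S} (h : IsNormalForm (m + 1) n t) (x : ℕ) :
    IsNormalForm m n (ETm.openE (.evar x (.tm 0)) m t) := by
  induction h with
  | idx hl => rw [openE_shift]; exact .idx hl
  | evar y n => rw [openE_shift]; exact .evar y n
  | @qvar i n hi =>
    rw [openE_shift, ETm.openE]
    split_ifs with him
    · exact .evar x n
    · exact .qvar n (by omega)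
  | fa _ ih => exact .fa ih

end NormalForms

section Model

/-- A value assigns to every context size `n` a term of sort `n`. -/
abbrev Val (S : BSig) : Type := ℕ → ETm S

/-- Environments, the common domain of values of terms and of substitutions.  A value is read off an
environment at address `0`; an infinite set of addresses makes environments carry a surjective
pairing, so that the rules of `σ` hold in the model also for ill-sorted terms. -/
abbrev Env (S : BSig) : Type := ℕ → Val S

/-- The surjective pairing of environments, along `ℕ ⊕ ℕ ≃ ℕ`. -/
def Env.pair (f g : Env S) : Env S := fun a => Sum.elim f g (Equiv.natSumNatEquivNat.symm a)

/-- The first projection of the pairing of environments. -/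
def Env.head (e : Env S) : Env S := fun a => e (Equiv.natSumNatEquivNat (.inl a))

/-- The second projection of the pairing of environments. -/
def Env.tail (e : Env S) : Env S := fun a => e (Equiv.natSumNatEquivNat (.inr a))

@[simp] theorem Env.head_pair (f g : Env S) : (Env.pair f g).head = f := by
  funext a; simp only [head, pair, Equiv.symm_apply_apply, Sum.elim_inl]

@[simp] theorem Env.tail_pair (f g : Env S) : (Env.pair f g).tail = g := by
  funext a; simp only [tail, pair, Equiv.symm_apply_apply, Sum.elim_inr]

@[simp] theorem Env.pair_head_tail (e : Env S) : Env.pair e.head e.tail = e := by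
  funext a
  obtain ⟨b, rfl⟩ := Equiv.natSumNatEquivNat.surjective a
  cases b <;> simp only [pair, head, tail, Equiv.symm_apply_apply, Sum.elim_inl, Sum.elim_inr]

/-- The denotations of terms and substitutions. -/
abbrev Den (S : BSig) : Type := Env S → Env S

/-- The value of the variable at de Bruijn level `l`. -/
def levelVal (S : BSig) (l : ℕ) : Val S := fun n => ETm.shift (.idx 1 (l + 1)) (l + 1) (n - (l + 1))

/-- The environment `e` on `n` variables, extended by `k` fresh variables. -/
def Env.extend : ℕ → ℕ → Env S → Env S
  | 0, _, e => e
  | k + 1, n, e => .pair (fun _ => levelVal S (n + k)) (extend k n e)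

/-- Normalization by evaluation: the denotation of a term under valuations of its named and of its
quantified variables. -/
def ETm.den (ρ : ℕ → Srt → Den S) (η : ℕ → Den S) : ETm S → Den S
  | .evar x s => ρ x s
  | .qvar i => η i
  | .idx i _ => fun e => (Env.tail^[i - 1] e).head
  | .fa f _ a => fun e _ n =>
      .fa f n fun j => den ρ η (a j) (e.extend ((S.far f).get j) n) 0 (n + (S.far f).get j)
  | .sub t s => den ρ η t ∘ den ρ η s
  | .eid _ => id
  | .cons t s => fun e => .pair (den ρ η t e) (den ρ η s e)
  | .up _ => Env.tail
  | .comp r s => den ρ η r ∘ den ρ η s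

variable (ρ : ℕ → Srt → Den S) (η : ℕ → Den S)

theorem den_upChain (p k : ℕ) : (upChain S p k).den ρ η = Env.tail^[k] := by
  fun_induction upChain S p k with
  | case1 => rfl
  | case2 => rfl
  | case3 p k ih => rw [ETm.den, ih, Function.iterate_succ' _ (k + 1)]; rfl

theorem den_shiftOne (q k j : ℕ) (e : Env S) :
    (shiftOne S q k j).den ρ η e = (Env.tail^[j] e).head := by
  unfold shiftOne
  split_ifs with hj
  · subst hj; rfl
  · simp only [ETm.den, den_upChain]; rfl

theorem Env.tail_iterate_extend (j k n : ℕ) (e : Env S) :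
    Env.tail^[j] (Env.extend (k + j) n e) = Env.extend k n e := by
  induction j with
  | zero => rfl
  | succ j ih => rw [Function.iterate_succ_apply, ← Nat.add_assoc, extend, tail_pair, ih]

theorem den_liftAux (q n : ℕ) (s : ETm S) (e : Env S) (m j : ℕ) :
    (liftAux S q (m + j) s m j).den ρ η (Env.extend (m + j) n e) =
      Env.extend m n (s.den ρ η e) := by
  suffices ∀ k, k = m + j → (liftAux S q k s m j).den ρ η (Env.extend k n e) =
      Env.extend m n (s.den ρ η e) from this _ rfl
  intro k hk
  induction m generalizing j with
  | zero =>
    have htail := Env.tail_iterate_extend k 0 n e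
    rw [Nat.zero_add] at htail
    simp only [liftAux, ETm.den, Function.comp_apply, den_upChain, htail, Env.extend]
  | succ m ih =>
    have htail := Env.tail_iterate_extend j (m + 1) n e
    rw [← hk] at htail
    simp only [liftAux, ETm.den, den_shiftOne, ih (j + 1) (by omega), htail, Env.extend,
      Env.head_pair]

theorem den_liftSub (q k n : ℕ) (s : ETm S) (e : Env S) :
    (liftSub S q k s).den ρ η (Env.extend k n e) = Env.extend k n (s.den ρ η e) := by
  cases k with
  | zero => rfl
  | succ k => exact den_liftAux ρ η q n s e (k + 1) 0

theorem Rw.den_eq {t u : ETm S} (h : Rw t u) : t.den ρ η = u.den ρ η := by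
  induction h with
  | ridx => simp only [ETm.den, den_upChain]; rfl
  | rfa => funext e a n; simp only [ETm.den, Function.comp_apply, den_liftSub]
  | @cfa f p a i t' _ ih =>
    have hden : (fun j => (Function.update a i t' j).den ρ η) = fun j => (a j).den ρ η := by
      funext j
      obtain rfl | hj := eq_or_ne j i
      · rw [Function.update_self, ih]
      · rw [Function.update_of_ne hj]
    simp only [ETm.den, fun j => congrFun hden j]
  | rhead | rtid | rclos | ridl | rshcons | rassoc | rmap | ridr | rvarsh | rscons =>
    funext e; simp [ETm.den]
  | csub₁ _ ih | csub₂ _ ih | ccons₁ _ ih | ccons₂ _ ih | ccomp₁ _ ih | ccomp₂ _ ih =>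
    simp only [ETm.den, ih]

theorem TmConv.den_eq {t u : ETm S} (h : TmConv S t u) : t.den ρ η = u.den ρ η := by
  induction h with
  | rel _ _ h => exact h.den_eq ρ η
  | refl => rfl
  | symm _ _ _ ih => exact ih.symm
  | trans _ _ _ _ _ ih₁ ih₂ => exact ih₁.trans ih₂

end Model

section Normalization

/-- The value `x` represents the term `t` of sort `n`: up to conversion it gives the normal forms of
all the shifts `t[↑^k]`. -/
def Represents (m n : ℕ) (t : ETm S) (x : Val S) : Prop :=
  ∀ k, IsNormalForm m (n + k) (x (n + k)) ∧ TmConv S (x (n + k)) (.sub t (upChain S n k))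

/-- The environment `e` represents the substitution `s` of sort `⟨n, p⟩`, componentwise. -/
def RepresentsSub (m n : ℕ) : ℕ → ETm S → Env S → Prop
  | 0, s, _ => TmConv S s (upChain S 0 n)
  | p + 1, s, e =>
      Represents m n (.sub (.idx 1 (p + 1)) s) (e.head 0) ∧
        RepresentsSub m n p (.comp (.up p) s) e.tail

variable {m n p : ℕ} {t t' s s' : ETm S} {x : Val S} {e : Env S}

theorem Represents.conv (h : Represents m n t x) (ht : TmConv S t' t) : Represents m n t' x :=
  fun k => ⟨(h k).1, (h k).2.trans (ht.symm.sub (.refl _))⟩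

theorem RepresentsSub.conv (h : RepresentsSub m n p s e) (hs : TmConv S s' s) :
    RepresentsSub m n p s' e := by
  induction p generalizing s s' e with
  | zero => exact hs.trans h
  | succ p ih => exact ⟨h.1.conv (.sub (.refl _) hs), ih h.2 (.comp (.refl _) hs)⟩

theorem Represents.shift (h : Represents m n t x) (l : ℕ) :
    Represents m (n + l) (.sub t (upChain S n l)) x := by
  intro k
  rw [Nat.add_assoc]
  refine ⟨(h _).1, (h (l + k)).2.trans ?_⟩
  exact (TmConv.sub (.refl _) (upChain_add n l k).symm).trans Rw.rclos.conv.symm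

theorem RepresentsSub.shift (h : RepresentsSub m n p s e) (l : ℕ) :
    RepresentsSub m (n + l) p (.comp s (upChain S n l)) e := by
  induction p generalizing s e with
  | zero =>
    have hchain := upChain_add (S := S) 0 n l
    rw [Nat.zero_add] at hchain
    exact (TmConv.comp h (.refl _)).trans hchain
  | succ p ih =>
    exact ⟨(h.1.shift l).conv Rw.rclos.conv.symm, (ih h.2).conv Rw.rassoc.conv.symm⟩

theorem represents_shift {q : ℕ} (h : ∀ k, IsNormalForm m (q + k) (t.shift q k)) :
    Represents m q t fun n => t.shift q (n - q) := fun k => by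
  simp only [Nat.add_sub_cancel_left]
  exact ⟨h k, shift_conv t q k⟩

theorem represents_levelVal (m n : ℕ) : Represents m (n + 1) (.idx 1 (n + 1)) (levelVal S n) :=
  represents_shift fun k => by
    simpa only [Nat.add_sub_cancel_left] using
      IsNormalForm.idx (S := S) (m := m) (by omega : n < n + 1 + k)

theorem RepresentsSub.lift (h : RepresentsSub m n p s e) :
    RepresentsSub m (n + 1) (p + 1) (.cons (.idx 1 (n + 1)) (.comp s (.up n)))
      (.pair (fun _ => levelVal S n) e) := by
  rw [RepresentsSub, Env.head_pair, Env.tail_pair]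
  exact ⟨(represents_levelVal m n).conv Rw.rhead.conv, (h.shift 1).conv Rw.rshcons.conv⟩

theorem RepresentsSub.liftSub (h : RepresentsSub m n p s e) (k : ℕ) :
    RepresentsSub m (n + k) (p + k) (liftSub S n k s) (e.extend k n) := by
  induction k with
  | zero => exact h
  | succ k ih => exact ih.lift.conv (liftSub_succ n k s)

theorem representsSub_eid (m p : ℕ) (e : Env S) : RepresentsSub m p p (.eid p) (e.extend p 0) := by
  induction p with
  | zero => exact .refl _
  | succ p ih =>
    rw [Env.extend, Nat.zero_add]
    exact ih.lift.conv (Rw.rvarsh.conv.symm.trans (.cons (.refl _) Rw.ridl.conv.symm))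

theorem RepresentsSub.idx {i : ℕ} (h : RepresentsSub m n p s e) (hi : i < p) :
    Represents m n (.sub (.idx (i + 1) p) s) ((Env.tail^[i] e).head 0) := by
  refine Represents.conv (t := .sub (.idx 1 (p - i)) (.comp (upChain S (p - i) i) s)) ?_ ?_
  · induction i generalizing p s e with
    | zero =>
      obtain ⟨p, rfl⟩ := Nat.exists_eq_add_one.2 hi
      exact h.1.conv (.sub (.refl _) Rw.ridl.conv)
    | succ i ih =>
      obtain ⟨p, rfl⟩ := Nat.exists_eq_add_one.2 (Nat.zero_lt_of_lt hi)
      have hchain := upChain_succ (S := S) (p - i) i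
      rw [Nat.sub_add_cancel (by omega)] at hchain
      rw [Nat.add_sub_add_right]
      exact (ih h.2 (by omega)).conv
        (.sub (.refl _) ((hchain.comp (.refl _)).trans Rw.rassoc.conv))
  · cases i with
    | zero => exact .sub (.refl _) Rw.ridl.conv.symm
    | succ i => exact ((Rw.ridx (by omega) hi).conv.sub (.refl _)).trans Rw.rclos.conv

theorem RepresentsSub.sub_var (h : RepresentsSub m n 0 s e)
    (ht : ∀ k, IsNormalForm m k (t.shift 0 k)) :
    Represents m n (.sub t s) (t.shift 0) := by
  have hshift : Represents m 0 t (t.shift 0) :=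
    represents_shift (q := 0) fun k => (Nat.zero_add k).symm ▸ ht k
  have hn := hshift.shift n
  rw [Nat.zero_add] at hn
  exact hn.conv (.sub (.refl _) h)

/-- The canonical denotation of a named variable.  In a substitution sort it is the one of
`t. … .t.↑ⁿ` with `t` a variable of sort `0`, which makes every sort inhabited by the denotation of
a term whose variables have sort `0`. -/
def nameDen (S : BSig) (x : ℕ) : Srt → Den S
  | .tm _ => fun _ _ => ETm.shift (.evar x (.tm 0)) 0
  | .sb n p => fun e => (Env.pair fun _ => ETm.shift (.evar x (.tm 0)) 0)^[p] (Env.tail^[n] e)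

/-- The canonical denotation of a quantified variable of sort `0`. -/
def qvarDen (S : BSig) (i : ℕ) : Den S := fun _ _ => ETm.shift (.qvar i) 0

/-- The logical relation between terms and denotations: applied to an environment representing a
substitution `s`, the denotation `d` of `a` represents `a[s]`, respectively `a ∘ s`. -/
def Realizes (m : ℕ) : Srt → ETm S → Den S → Prop
  | .tm p, a, d => ∀ n s e, HasSort (.replicate m (.tm 0)) s (.sb n p) → RepresentsSub m n p s e →
      Represents m n (.sub a s) (d e 0)
  | .sb p q, a, d => ∀ n s e, HasSort (.replicate m (.tm 0)) s (.sb n p) →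
      RepresentsSub m n p s e → RepresentsSub m n q (.comp a s) (d e)

theorem realizes_fa {f : S.Fn} {a : Fin (S.far f).length → ETm S}
    {d : Fin (S.far f).length → Den S}
    (h : ∀ j, Realizes m (.tm (p + (S.far f).get j)) (a j) (d j)) :
    Realizes m (.tm p) (.fa f p a) fun e _ n =>
      .fa f n fun j => d j (e.extend ((S.far f).get j) n) 0 (n + (S.far f).get j) := by
  intro n s e hs hse l
  have hs' : HasSort (.replicate m (.tm 0)) (.comp s (upChain S n l)) (.sb (n + l) p) :=
    .comp hs (upChain_sort _ n l)
  have harg j := h j _ _ _ (liftSub_sort hs' _) ((hse.shift l).liftSub ((S.far f).get j)) 0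
  refine ⟨.fa fun j => (harg j).1, ?_⟩
  calc TmConv S _ (.fa f (n + l) fun j => .sub (a j) (liftSub S (n + l) ((S.far f).get j) _)) :=
        .fa fun j => (harg j).2.trans Rw.rtid.conv
    TmConv S _ (.sub (.fa f p a) (.comp s (upChain S n l))) := (Rw.rfa ⟨_, hs'⟩).conv.symm
    TmConv S _ (.sub (.sub (.fa f p a) s) (upChain S n l)) := Rw.rclos.conv.symm

theorem realizes_den {a : ETm S} {srt : Srt} (h : HasSort (.replicate m (.tm 0)) a srt)
    (hv : a.vars0) : Realizes m srt a (a.den (nameDen S) (qvarDen S)) := by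
  induction h with
  | evar =>
    cases hv
    exact fun n s e _ hse => hse.sub_var fun k => .evar _ k
  | qvar hi =>
    rw [List.getElem?_replicate] at hi
    split_ifs at hi with him
    cases hi
    exact fun n s e _ hse => hse.sub_var fun k => .qvar k him
  | idx h₁ h₂ =>
    obtain ⟨i, rfl⟩ := Nat.exists_eq_add_one.2 h₁
    exact fun n s e _ hse => hse.idx h₂
  | fa _ ih => exact realizes_fa fun j => ih j (hv j)
  | sub _ h₂ ih₁ ih₂ =>
    exact fun n s e hs hse =>
      (ih₁ hv.1 n _ _ (.comp h₂ hs) (ih₂ hv.2 n s e hs hse)).conv Rw.rclos.conv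
  | eid => exact fun n s e _ hse => hse.conv Rw.ridl.conv
  | cons _ _ ih₁ ih₂ =>
    intro n s e hs hse
    refine RepresentsSub.conv ?_ Rw.rmap.conv
    rw [RepresentsSub, ETm.den, Env.head_pair, Env.tail_pair]
    exact ⟨(ih₁ hv.1 n s e hs hse).conv Rw.rhead.conv,
      (ih₂ hv.2 n s e hs hse).conv Rw.rshcons.conv⟩
  | up => exact fun n s e _ hse => hse.2
  | comp _ h₂ ih₁ ih₂ =>
    exact fun n s e hs hse =>
      (ih₁ hv.1 n _ _ (.comp h₂ hs) (ih₂ hv.2 n s e hs hse)).conv Rw.rassoc.conv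

/-- The term of sort `p` read off its denotation, by evaluation at `p` fresh variables; the rest of
the environment is irrelevant. -/
def reify (p : ℕ) (d : Den S) : ETm S := d (Env.extend p 0 fun _ => levelVal S 0) 0 p

/-- The canonical denotation of a term. -/
abbrev ETm.sem (t : ETm S) : Den S := t.den (nameDen S) (qvarDen S)

theorem reify_sem (h : HasSort (.replicate m (.tm 0)) t (.tm p)) (hv : t.vars0) :
    IsNormalForm m p (reify p t.sem) ∧ TmConv S t (reify p t.sem) := by
  have hid := representsSub_eid (S := S) m p fun _ => levelVal S 0
  obtain ⟨hnf, hconv⟩ := realizes_den h hv p _ _ .eid hid 0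
  exact ⟨hnf, (hconv.trans (Rw.rtid.conv.trans Rw.rtid.conv)).symm⟩

/-- Normal form of a well-sorted proposition. -/
def EFm.nf : EFm S → EFm S
  | .atom P a => .atom P fun i => reify ((S.par P).get i) (a i).sem
  | .imp A B => .imp A.nf B.nf
  | .conj A B => .conj A.nf B.nf
  | .disj A B => .disj A.nf B.nf
  | .bot => .bot
  | .all s A => .all s A.nf
  | .ex s A => .ex s A.nf

/-- Propositions whose terms are normal forms and whose bound variables have sort `0`, with
quantified variables among the first `m`. -/
def EFm.IsNormal : ℕ → EFm S → Prop
  | m, .atom P a => ∀ i, IsNormalForm m ((S.par P).get i) (a i)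
  | m, .imp A B => A.IsNormal m ∧ B.IsNormal m
  | m, .conj A B => A.IsNormal m ∧ B.IsNormal m
  | m, .disj A B => A.IsNormal m ∧ B.IsNormal m
  | _, .bot => True
  | m, .all s A => s = .tm 0 ∧ A.IsNormal (m + 1)
  | m, .ex s A => s = .tm 0 ∧ A.IsNormal (m + 1)

theorem EFm.isNormal_nf {A : EFm S} (hs : EFmSorted (.replicate m (.tm 0)) A) (hv : A.vars0F) :
    A.nf.IsNormal m := by
  induction A generalizing m with
  | atom P a => exact fun i => (reify_sem (hs i) (hv i)).1
  | bot => trivial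
  | imp A B ihA ihB | conj A B ihA ihB | disj A B ihA ihB =>
    exact ⟨ihA hs.1 hv.1, ihB hs.2 hv.2⟩
  | all s A ih | ex s A ih =>
    obtain ⟨rfl, hv⟩ := hv
    exact ⟨rfl, ih hs hv⟩

theorem EFm.conv_nf {A : EFm S} (hs : EFmSorted (.replicate m (.tm 0)) A) (hv : A.vars0F) :
    FConv A A.nf := by
  induction A generalizing m with
  | atom P a => exact .atom fun i => (reify_sem (hs i) (hv i)).2
  | bot => exact .bot
  | imp A B ihA ihB => exact .imp (ihA hs.1 hv.1) (ihB hs.2 hv.2)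
  | conj A B ihA ihB => exact .conj (ihA hs.1 hv.1) (ihB hs.2 hv.2)
  | disj A B ihA ihB => exact .disj (ihA hs.1 hv.1) (ihB hs.2 hv.2)
  | all s A ih =>
    obtain ⟨rfl, hv⟩ := hv
    exact .all (ih (m := m + 1) hs hv)
  | ex s A ih =>
    obtain ⟨rfl, hv⟩ := hv
    exact .ex (ih (m := m + 1) hs hv)

theorem EFm.IsNormal.openF_evar {A : EFm S} (h : A.IsNormal (m + 1)) (x : ℕ) :
    (EFm.openF (.evar x (.tm 0)) m A).IsNormal m := by
  induction A generalizing m with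
  | atom P a => exact fun i => (h i).openE_evar x
  | bot => trivial
  | imp A B ihA ihB | conj A B ihA ihB | disj A B ihA ihB => exact ⟨ihA h.1, ihB h.2⟩
  | all s A ih | ex s A ih => exact ⟨h.1, ih h.2⟩

theorem EFm.IsNormal.tmsNormal {A : EFm S} (h : A.IsNormal m) : A.TmsNormal := by
  induction A generalizing m with
  | atom P a => exact fun i => (h i).normal
  | bot => trivial
  | imp A B ihA ihB | conj A B ihA ihB | disj A B ihA ihB => exact ⟨ihA h.1, ihB h.2⟩
  | all s A ih | ex s A ih => exact ih h.2

theorem EFm.IsNormal.vars0F {A : EFm S} (h : A.IsNormal m) : A.vars0F := by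
  induction A generalizing m with
  | atom P a => exact fun i => (h i).vars0
  | bot => trivial
  | imp A B ihA ihB | conj A B ihA ihB | disj A B ihA ihB => exact ⟨ihA h.1, ihB h.2⟩
  | all s A ih | ex s A ih => exact ⟨h.1, ih h.2⟩

theorem EFm.IsNormal.sorted {A : EFm S} (h : A.IsNormal m) :
    EFmSorted (.replicate m (.tm 0)) A := by
  induction A generalizing m with
  | atom P a => exact fun i => (h i).hasSort
  | bot => trivial
  | imp A B ihA ihB | conj A B ihA ihB | disj A B ihA ihB => exact ⟨ihA h.1, ihB h.2⟩
  | all s A ih | ex s A ih =>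
    obtain ⟨rfl, h⟩ := h
    exact ih h

theorem EFm.IsNormal.fProp {A : EFm S} (h : A.IsNormal 0) : FProp A :=
  ⟨h.tmsNormal, h.vars0F, h.sorted⟩

end Normalization

section Semantics

theorem ETm.den_openE (ρ : ℕ → Srt → Den S) (η : ℕ → Den S) (u : ETm S) (k : ℕ) (a : ETm S) :
    (ETm.openE u k a).den ρ η = a.den ρ (Function.update η k (u.den ρ η)) := by
  induction a with
  | qvar i =>
    rw [openE, den, Function.update_apply]
    split_ifs <;> rfl
  | fa f p a ih => simp only [openE, den, ih]
  | sub t s iht ihs | cons t s iht ihs | comp t s iht ihs => simp only [openE, den, iht, ihs]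
  | evar | idx | eid | up => rfl

theorem ETm.den_update_name {x : ℕ} (ρ : ℕ → Srt → Den S) (r : Srt → Den S) (η : ℕ → Den S)
    {a : ETm S} (hx : x ∉ a.fvs) : a.den (Function.update ρ x r) η = a.den ρ η := by
  induction a with
  | evar y s => exact congrFun (Function.update_of_ne (Ne.symm hx) _ _) s
  | fa f p a ih =>
    have hden : ∀ j, (a j).den (Function.update ρ x r) η = (a j).den ρ η := fun j =>
      ih j fun h => hx (Set.mem_iUnion_of_mem j h)
    simp only [den, hden]
  | sub t s iht ihs | cons t s iht ihs | comp t s iht ihs =>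
    simp only [den, iht fun h => hx (.inl h), ihs fun h => hx (.inr h)]
  | qvar | idx | eid | up => rfl

theorem HasSort.den_eq_of_closed {a : ETm S} {s : Srt} (h : HasSort [] a s)
    (ρ : ℕ → Srt → Den S) (η η' : ℕ → Den S) : a.den ρ η = a.den ρ η' := by
  induction h with
  | qvar hi => simp at hi
  | fa _ ih => simp only [ETm.den, ih]
  | sub _ _ ih₁ ih₂ | cons _ _ ih₁ ih₂ | comp _ _ ih₁ ih₂ =>
    simp only [ETm.den, ih₁, ih₂]
  | evar | idx | eid | up => rfl

/-- The domain of the sort `s`: the denotations of the closed terms of sort `s` whose variables have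
sort `0`. -/
def carrier (S : BSig) (s : Srt) : Set (Den S) :=
  {d | ∃ t : ETm S, HasSort [] t s ∧ t.vars0 ∧ t.sem = d}

theorem nameDen_mem_carrier (x : ℕ) (s : Srt) : nameDen S x s ∈ carrier S s := by
  have hsort : ∀ n, HasSort [] (ETm.shift (.evar x (.tm 0)) 0 n : ETm S) (.tm n) := fun n => by
    simpa only [Nat.zero_add] using shift_sort (p := 0) .evar n
  have hvars : ∀ n, (ETm.shift (.evar x (.tm 0)) 0 n : ETm S).vars0 := fun n =>
    vars0_shift (by rfl) 0 n
  have hsem : ∀ n, (ETm.shift (.evar x (.tm 0)) 0 n).sem =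
      fun _ _ => ETm.shift (S := S) (.evar x (.tm 0)) 0 := fun n => by
    rw [ETm.sem, (shift_conv _ 0 n).den_eq]; rfl
  cases s with
  | tm n => exact ⟨_, hsort n, hvars n, hsem n⟩
  | sb n p =>
    induction p with
    | zero =>
      exact ⟨upChain S 0 n, by simpa only [Nat.zero_add] using upChain_sort [] 0 n,
        vars0_upChain 0 n, den_upChain _ _ 0 n⟩
    | succ p ih =>
      obtain ⟨t, ht, htv, hts⟩ := ih
      refine ⟨.cons _ t, .cons (hsort n) ht, ⟨hvars n, htv⟩, ?_⟩
      change (fun e => Env.pair (ETm.sem _ e) (t.sem e)) = _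
      funext e
      rw [hsem, hts]
      exact (Function.iterate_succ_apply' _ p _).symm

theorem den_mem_carrier {ρ : ℕ → Srt → Den S} (hρ : ∀ x s, ρ x s ∈ carrier S s) (η : ℕ → Den S)
    {a : ETm S} {s : Srt} (h : HasSort [] a s) : a.den ρ η ∈ carrier S s := by
  induction h with
  | evar => exact hρ _ _
  | qvar hi => simp at hi
  | idx h₁ h₂ => exact ⟨.idx _ _, .idx h₁ h₂, trivial, rfl⟩
  | @fa f p a _ ih =>
    choose t ht htv hts using ih
    exact ⟨.fa f p t, .fa ht, htv, by simp only [ETm.sem, ETm.den, hts]⟩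
  | sub _ _ ih₁ ih₂ =>
    obtain ⟨t, ht, htv, hts⟩ := ih₁
    obtain ⟨r, hr, hrv, hrs⟩ := ih₂
    exact ⟨.sub t r, .sub ht hr, ⟨htv, hrv⟩, congrArg₂ (· ∘ ·) hts hrs⟩
  | eid => exact ⟨.eid _, .eid, trivial, rfl⟩
  | cons _ _ ih₁ ih₂ =>
    obtain ⟨t, ht, htv, hts⟩ := ih₁
    obtain ⟨r, hr, hrv, hrs⟩ := ih₂
    exact ⟨.cons t r, .cons ht hr, ⟨htv, hrv⟩,
      congrArg₂ (fun d d' e => Env.pair (d e) (d' e)) hts hrs⟩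
  | up => exact ⟨.up _, .up, trivial, rfl⟩
  | comp _ _ ih₁ ih₂ =>
    obtain ⟨t, ht, htv, hts⟩ := ih₁
    obtain ⟨r, hr, hrv, hrs⟩ := ih₂
    exact ⟨.comp t r, .comp ht hr, ⟨htv, hrv⟩, congrArg₂ (· ∘ ·) hts hrs⟩

theorem carrier_tm_zero :
    carrier S (.tm 0) = Set.range fun t : {t : ETm S // FTerm0 t} => t.1.sem := by
  ext d
  constructor
  · rintro ⟨t, ht, htv, rfl⟩
    obtain ⟨hnf, hconv⟩ := reify_sem (m := 0) ht htv
    exact ⟨⟨_, hnf.normal, hnf.vars0, hnf.hasSort⟩, (hconv.den_eq _ _).symm⟩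
  · rintro ⟨⟨t, -, htv, ht⟩, rfl⟩
    exact ⟨t, ht, htv, rfl⟩

/-- The valuation of quantified variables under one more quantifier. -/
def pushDen (d : Den S) (η : ℕ → Den S) : ℕ → Den S
  | 0 => d
  | i + 1 => η i

theorem pushDen_update (d u : Den S) (η : ℕ → Den S) (k : ℕ) :
    pushDen d (Function.update η k u) = Function.update (pushDen d η) (k + 1) u := by
  funext i
  cases i with
  | zero => rfl
  | succ i => simp only [pushDen, Function.update_apply, Nat.add_right_cancel_iff]

theorem pushDen_const (d c : Den S) :
    pushDen d (fun _ => c) = Function.update (fun _ => c) 0 d := by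
  funext i
  cases i <;> rfl

variable {B : Type*} [CompleteBooleanAlgebra B]
  (I : (P : S.Pr) → (Fin (S.par P).length → Den S) → B)

/-- The truth value of a proposition under the interpretation `I` of the predicate symbols. -/
def EFm.value (ρ : ℕ → Srt → Den S) : (ℕ → Den S) → EFm S → B
  | η, .atom P a => I P fun i => (a i).den ρ η
  | η, .imp A B => A.value ρ η ⇨ B.value ρ η
  | η, .conj A B => A.value ρ η ⊓ B.value ρ η
  | η, .disj A B => A.value ρ η ⊔ B.value ρ η
  | _, .bot => ⊥
  | η, .all s A => ⨅ d ∈ carrier S s, A.value ρ (pushDen d η)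
  | η, .ex s A => ⨆ d ∈ carrier S s, A.value ρ (pushDen d η)

theorem EFm.value_openF {ρ : ℕ → Srt → Den S} {u : ETm S} {s : Srt} (hu : HasSort [] u s)
    (η : ℕ → Den S) (k : ℕ) (A : EFm S) :
    (EFm.openF u k A).value I ρ η = A.value I ρ (Function.update η k (u.den ρ η)) := by
  induction A generalizing η k with
  | atom P a => simp only [openF, value, ETm.den_openE]
  | bot => rfl
  | imp A B ihA ihB | conj A B ihA ihB | disj A B ihA ihB => simp only [openF, value, ihA, ihB]
  | all s A ih | ex s A ih =>
    simp only [openF, value, ih, pushDen_update, hu.den_eq_of_closed ρ (pushDen _ η) η]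

theorem EFm.value_update_name {x : ℕ} (ρ : ℕ → Srt → Den S) (r : Srt → Den S) {A : EFm S}
    (hx : x ∉ A.fvs) (η : ℕ → Den S) :
    A.value I (Function.update ρ x r) η = A.value I ρ η := by
  induction A generalizing η with
  | atom P a =>
    have hden : ∀ i, (a i).den (Function.update ρ x r) η = (a i).den ρ η := fun i =>
      ETm.den_update_name ρ r η fun h => hx (Set.mem_iUnion_of_mem i h)
    simp only [value, hden]
  | bot => rfl
  | imp A B ihA ihB | conj A B ihA ihB | disj A B ihA ihB =>
    simp only [value, ihA fun h => hx (.inl h), ihB fun h => hx (.inr h)]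
  | all s A ih | ex s A ih => simp only [value, ih hx]

theorem FConv.value_eq {A A' : EFm S} (h : FConv A A') (ρ : ℕ → Srt → Den S) (η : ℕ → Den S) :
    A.value I ρ η = A'.value I ρ η := by
  induction h generalizing η with
  | atom h => simp only [EFm.value, fun i => (h i).den_eq ρ η]
  | bot => rfl
  | imp _ _ ihA ihB | conj _ _ ihA ihB | disj _ _ ihA ihB => simp only [EFm.value, ihA, ihB]
  | all _ ih | ex _ ih => simp only [EFm.value, ih]

/-- The truth value of a proposition without dangling quantified variables; these would take the
constant value `id`, and `EFm.openF` does not renumber them. -/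
abbrev EFm.eval (ρ : ℕ → Srt → Den S) (A : EFm S) : B := A.value I ρ fun _ => id

variable {I}

theorem EFm.eval_openF {ρ : ℕ → Srt → Den S} {u : ETm S} {s : Srt} (hu : HasSort [] u s)
    (A : EFm S) :
    (EFm.openF u 0 A).eval I ρ = A.value I ρ (pushDen (u.den ρ fun _ => id) fun _ => id) := by
  rw [eval, value_openF I hu, pushDen_const]

theorem EFm.eval_all_le {ρ : ℕ → Srt → Den S} (hρ : ∀ x s, ρ x s ∈ carrier S s) {u : ETm S}
    {s : Srt} (hu : HasSort [] u s) (A : EFm S) :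
    (EFm.all s A).eval I ρ ≤ (EFm.openF u 0 A).eval I ρ := by
  rw [eval_openF hu]
  exact biInf_le _ (den_mem_carrier hρ _ hu)

theorem EFm.le_eval_ex {ρ : ℕ → Srt → Den S} (hρ : ∀ x s, ρ x s ∈ carrier S s) {u : ETm S}
    {s : Srt} (hu : HasSort [] u s) (A : EFm S) :
    (EFm.openF u 0 A).eval I ρ ≤ (EFm.ex s A).eval I ρ := by
  rw [eval_openF hu]
  exact le_biSup (fun d => A.value I ρ (pushDen d _)) (den_mem_carrier hρ _ hu)

/-- The valuation `ρ` with the value of the variable `x` of sort `s` changed to `d`. -/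
def setName (ρ : ℕ → Srt → Den S) (x : ℕ) (s : Srt) (d : Den S) : ℕ → Srt → Den S :=
  Function.update ρ x (Function.update (ρ x) s d)

theorem setName_mem_carrier {ρ : ℕ → Srt → Den S} (hρ : ∀ x s, ρ x s ∈ carrier S s) {s : Srt}
    {d : Den S} (hd : d ∈ carrier S s) (x y : ℕ) (s' : Srt) :
    setName ρ x s d y s' ∈ carrier S s' := by
  obtain rfl | hy := eq_or_ne y x
  · rw [setName, Function.update_self]
    obtain rfl | hs := eq_or_ne s' s
    · rwa [Function.update_self]
    · rw [Function.update_of_ne hs]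
      exact hρ _ _
  · rw [setName, Function.update_of_ne hy]
    exact hρ _ _

theorem EFm.eval_setName_openF {x : ℕ} {A : EFm S} (hx : x ∉ A.fvs) (ρ : ℕ → Srt → Den S)
    (s : Srt) (d : Den S) :
    (EFm.openF (.evar x s) 0 A).eval I (setName ρ x s d) = A.value I ρ (pushDen d fun _ => id) := by
  have hd : setName ρ x s d x s = d := by rw [setName, Function.update_self, Function.update_self]
  rw [eval_openF .evar, ETm.den, hd]
  exact value_update_name I ρ _ hx _

theorem map_eval_setName {x : ℕ} {Γ : Multiset (EFm S)} (hx : x ∉ mFvE Γ) (ρ : ℕ → Srt → Den S)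
    (s : Srt) (d : Den S) : Γ.map (EFm.eval I (setName ρ x s d)) = Γ.map (EFm.eval I ρ) :=
  Multiset.map_congr rfl fun A hA => A.value_update_name I ρ _ (fun h => hx ⟨A, hA, h⟩) _

variable (I)

/-- Semantic validity of a sequent: in the Boolean algebra, the meet of its antecedent is below the
join of its succedent, under all valuations of the named variables. -/
def Valid (Γ Δ : Multiset (EFm S)) : Prop :=
  ∀ ρ, (∀ x s, ρ x s ∈ carrier S s) → (Γ.map (EFm.eval I ρ)).inf ≤ (Δ.map (EFm.eval I ρ)).sup

variable {I} {Γ Δ : Multiset (EFm S)} {A A' : EFm S} {s : Srt} {x : ℕ}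

theorem Valid.all_right (hΓ : x ∉ mFvE Γ) (hΔ : x ∉ mFvE Δ) (hA : x ∉ A.fvs)
    (h : Valid I Γ (EFm.openF (.evar x s) 0 A ::ₘ Δ)) : Valid I Γ (.all s A ::ₘ Δ) := by
  intro ρ hρ
  rw [Multiset.map_cons, Multiset.sup_cons, EFm.eval, EFm.value, iInf₂_sup_eq]
  refine le_iInf₂ fun d hd => ?_
  have hval := h _ (setName_mem_carrier hρ hd x)
  rwa [Multiset.map_cons, Multiset.sup_cons, EFm.eval_setName_openF hA, map_eval_setName hΓ,
    map_eval_setName hΔ] at hval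

theorem Valid.ex_left (hΓ : x ∉ mFvE Γ) (hΔ : x ∉ mFvE Δ) (hA : x ∉ A.fvs)
    (h : Valid I (EFm.openF (.evar x s) 0 A ::ₘ Γ) Δ) : Valid I (.ex s A ::ₘ Γ) Δ := by
  intro ρ hρ
  rw [Multiset.map_cons, Multiset.inf_cons, EFm.eval, EFm.value, iSup₂_inf_eq]
  refine iSup₂_le fun d hd => ?_
  have hval := h _ (setName_mem_carrier hρ hd x)
  rwa [Multiset.map_cons, Multiset.inf_cons, EFm.eval_setName_openF hA, map_eval_setName hΓ,
    map_eval_setName hΔ] at hval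

theorem Valid.congr_left (hA : FConv A A') (h : Valid I (A' ::ₘ Γ) Δ) : Valid I (A ::ₘ Γ) Δ := by
  intro ρ hρ
  rw [Multiset.map_cons, EFm.eval, hA.value_eq, ← Multiset.map_cons]
  exact h ρ hρ

theorem Valid.congr_right (hA : FConv A A') (h : Valid I Γ (A' ::ₘ Δ)) : Valid I Γ (A ::ₘ Δ) := by
  intro ρ hρ
  rw [Multiset.map_cons, EFm.eval, hA.value_eq, ← Multiset.map_cons]
  exact h ρ hρ

theorem Valid.cut (h₁ : Valid I (A ::ₘ Γ) Δ) (h₂ : Valid I Γ (A ::ₘ Δ)) : Valid I Γ Δ := by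
  intro ρ hρ
  have h₁ := h₁ ρ hρ
  have h₂ := h₂ ρ hρ
  rw [Multiset.map_cons, Multiset.inf_cons, inf_comm] at h₁
  rw [Multiset.map_cons, Multiset.sup_cons, sup_comm] at h₂
  exact le_of_inf_le_sup_le (le_inf h₁ inf_le_right) (sup_le h₂ le_sup_right)

theorem Valid.imp_left (h₁ : Valid I Γ (A ::ₘ Δ)) (h₂ : Valid I (A' ::ₘ Γ) Δ) :
    Valid I (.imp A A' ::ₘ Γ) Δ := by
  intro ρ hρ
  have h₁ := h₁ ρ hρ
  have h₂ := h₂ ρ hρ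
  simp only [Multiset.map_cons, Multiset.inf_cons, Multiset.sup_cons, EFm.value] at h₁ h₂ ⊢
  rw [himp_eq, inf_sup_right, inf_comm (_ᶜ), ← sdiff_eq]
  exact sup_le h₂ (sdiff_le_iff.2 h₁)

theorem Valid.imp_right (h : Valid I (A ::ₘ Γ) (A' ::ₘ Δ)) : Valid I Γ (.imp A A' ::ₘ Δ) := by
  intro ρ hρ
  have h := h ρ hρ
  simp only [Multiset.map_cons, Multiset.inf_cons, Multiset.sup_cons, EFm.value] at h ⊢
  rwa [himp_eq, sup_right_comm, ← himp_eq, le_himp_iff']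

theorem Valid.all_left {u : ETm S} (hu : HasSort [] u s) (h : Valid I (EFm.openF u 0 A ::ₘ Γ) Δ) :
    Valid I (.all s A ::ₘ Γ) Δ := by
  intro ρ hρ
  have h := h ρ hρ
  rw [Multiset.map_cons, Multiset.inf_cons] at h ⊢
  exact (inf_le_inf_right _ (EFm.eval_all_le hρ hu A)).trans h

theorem Valid.ex_right {u : ETm S} (hu : HasSort [] u s) (h : Valid I Γ (EFm.openF u 0 A ::ₘ Δ)) :
    Valid I Γ (.ex s A ::ₘ Δ) := by
  intro ρ hρ
  have h := h ρ hρ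
  rw [Multiset.map_cons, Multiset.sup_cons] at h ⊢
  exact h.trans (sup_le_sup_right (EFm.le_eval_ex hρ hu A) _)

theorem Valid.contraction_left (h : Valid I (A ::ₘ A ::ₘ Γ) Δ) : Valid I (A ::ₘ Γ) Δ := by
  intro ρ hρ
  simpa only [Multiset.map_cons, Multiset.inf_cons, inf_left_idem] using h ρ hρ

theorem Valid.contraction_right (h : Valid I Γ (A ::ₘ A ::ₘ Δ)) : Valid I Γ (A ::ₘ Δ) := by
  intro ρ hρ
  simpa only [Multiset.map_cons, Multiset.sup_cons, sup_left_idem] using h ρ hρ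

theorem Valid.weakening_left (h : Valid I Γ Δ) : Valid I (A ::ₘ Γ) Δ := by
  intro ρ hρ
  simpa only [Multiset.map_cons, Multiset.inf_cons] using inf_le_of_right_le (h ρ hρ)

theorem Valid.weakening_right (h : Valid I Γ Δ) : Valid I Γ (A ::ₘ Δ) := by
  intro ρ hρ
  simpa only [Multiset.map_cons, Multiset.sup_cons] using le_sup_of_le_right (h ρ hρ)

theorem DerivM.valid {n : ℕ} (h : DerivM FConv n Γ Δ) : Valid I Γ Δ := by
  induction h with
  | ax hE =>
    refine .congr_left (Γ := 0) hE fun ρ _ => ?_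
    simp only [Multiset.cons_zero, Multiset.map_singleton, Multiset.inf_singleton,
      Multiset.sup_singleton, le_refl]
  | cut hE _ _ ih₁ ih₂ => exact .cut ih₁ (.congr_right hE ih₂)
  | contrL hE₁ hE₂ _ ih =>
    refine .contraction_left (.congr_left hE₁ ?_)
    rw [Multiset.cons_swap] at ih ⊢
    exact .congr_left hE₂ ih
  | contrR hE₁ hE₂ _ ih =>
    refine .contraction_right (.congr_right hE₁ ?_)
    rw [Multiset.cons_swap] at ih ⊢
    exact .congr_right hE₂ ih
  | weakL _ ih => exact ih.weakening_left
  | weakR _ ih => exact ih.weakening_right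
  | impL hE _ _ ih₁ ih₂ => exact .congr_left hE (.imp_left ih₁ ih₂)
  | impR hE _ ih => exact .congr_right hE (.imp_right ih)
  | conjL hE _ ih =>
    refine .congr_left hE fun ρ hρ => ?_
    simpa only [Multiset.map_cons, Multiset.inf_cons, EFm.value, inf_assoc] using ih ρ hρ
  | conjR hE _ _ ih₁ ih₂ =>
    refine .congr_right hE fun ρ hρ => ?_
    simpa only [Multiset.map_cons, Multiset.sup_cons, EFm.value, sup_inf_right] using
      le_inf (ih₁ ρ hρ) (ih₂ ρ hρ)
  | disjL hE _ _ ih₁ ih₂ =>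
    refine .congr_left hE fun ρ hρ => ?_
    simpa only [Multiset.map_cons, Multiset.inf_cons, EFm.value, inf_sup_right] using
      sup_le (ih₁ ρ hρ) (ih₂ ρ hρ)
  | disjR hE _ ih =>
    refine .congr_right hE fun ρ hρ => ?_
    simpa only [Multiset.map_cons, Multiset.sup_cons, EFm.value, sup_assoc] using ih ρ hρ
  | botL hE =>
    refine .congr_left hE fun ρ _ => ?_
    simp only [Multiset.map_cons, Multiset.inf_cons, EFm.value, bot_inf_eq, bot_le]
  | allL hE₁ hE₂ ht _ ih => exact .congr_left hE₁ (.all_left ht (.congr_left hE₂.symm ih))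
  | allR hE hΓ hΔ hA _ ih => exact .congr_right hE (.all_right hΓ hΔ hA ih)
  | exL hE hΓ hΔ hA _ ih => exact .congr_left hE (.ex_left hΓ hΔ hA ih)
  | exR hE₁ hE₂ ht _ ih => exact .congr_right hE₁ (.ex_right ht (.congr_right hE₂.symm ih))

end Semantics

section Structural

variable {E : EFm S → EFm S → Prop} {TF : EFm S → Prop} {TT : ETm S → Prop}
  {Γ Γ' Δ Δ' : Multiset (EFm S)} {A A' : EFm S}

theorem AllTF.cons (hA : TF A) (hΓ : AllTF TF Γ) : AllTF TF (A ::ₘ Γ) :=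
  Multiset.forall_mem_cons.2 ⟨hA, hΓ⟩

theorem AllTF.tail (h : AllTF TF (A ::ₘ Γ)) : AllTF TF Γ := (Multiset.forall_mem_cons.1 h).2

theorem DerivR.allTF (h : DerivR E TF TT Γ Δ) : AllTF TF Γ ∧ AllTF TF Δ := by
  cases h with
  | ax hA hB =>
    exact ⟨fun _ h => Multiset.mem_singleton.1 h ▸ hA, fun _ h => Multiset.mem_singleton.1 h ▸ hB⟩
  | _ => exact ⟨‹_›, ‹_›⟩

theorem DerivR.weakening_left (h : DerivR E TF TT Γ Δ) (hle : Γ ≤ Γ') (hΓ' : AllTF TF Γ') :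
    DerivR E TF TT Γ' Δ := by
  obtain ⟨Γ₁, rfl⟩ := Multiset.le_iff_exists_add.1 hle
  clear hle
  induction Γ₁ using Multiset.induction_on with
  | empty => rwa [add_zero]
  | cons A Γ₁ ih =>
    rw [Multiset.add_cons] at hΓ' ⊢
    exact .weakL hΓ' h.allTF.2 (ih hΓ'.tail)

theorem DerivR.weakening_right (h : DerivR E TF TT Γ Δ) (hle : Δ ≤ Δ') (hΔ' : AllTF TF Δ') :
    DerivR E TF TT Γ Δ' := by
  obtain ⟨Δ₁, rfl⟩ := Multiset.le_iff_exists_add.1 hle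
  clear hle
  induction Δ₁ using Multiset.induction_on with
  | empty => rwa [add_zero]
  | cons A Δ₁ ih =>
    rw [Multiset.add_cons] at hΔ' ⊢
    exact .weakR h.allTF.1 hΔ' (ih hΔ'.tail)

theorem DerivR.weakening (h : DerivR E TF TT Γ Δ) (hΓ : Γ ≤ Γ') (hΔ : Δ ≤ Δ')
    (hΓ' : AllTF TF Γ') (hΔ' : AllTF TF Δ') : DerivR E TF TT Γ' Δ' :=
  (h.weakening_left hΓ hΓ').weakening_right hΔ hΔ'

theorem DerivR.identity (hA : E A A) (hΓ : AllTF TF Γ) (hΔ : AllTF TF Δ) (hAΓ : A ∈ Γ)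
    (hAΔ : A ∈ Δ) : DerivR E TF TT Γ Δ :=
  (DerivR.ax (hΓ A hAΓ) (hΓ A hAΓ) hA).weakening (Multiset.singleton_le.2 hAΓ)
    (Multiset.singleton_le.2 hAΔ) hΓ hΔ

theorem DerivR.cut_left (h : DerivR E TF TT (A ::ₘ Γ) Δ) (hA : E A A) (hΓ : Γ ≤ Γ') (hΔ : Δ ≤ Δ')
    (h' : DerivR E TF TT Γ' (A ::ₘ Δ')) : DerivR E TF TT Γ' Δ' :=
  have hTF : TF A := h.allTF.1 A (Multiset.mem_cons_self A Γ)
  have hΔ' : AllTF TF Δ' := h'.allTF.2.tail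
  .cut h'.allTF.1 hΔ' hTF hTF hA
    (h.weakening ((Multiset.cons_le_cons_iff A).2 hΓ) hΔ (.cons hTF h'.allTF.1) hΔ') h'

theorem DerivR.cut_right (h : DerivR E TF TT Γ (A ::ₘ Δ)) (hA : E A A) (hΓ : Γ ≤ Γ') (hΔ : Δ ≤ Δ')
    (h' : DerivR E TF TT (A ::ₘ Γ') Δ') : DerivR E TF TT Γ' Δ' :=
  have hTF : TF A := h.allTF.2 A (Multiset.mem_cons_self A Δ)
  have hΓ' : AllTF TF Γ' := h'.allTF.1.tail
  .cut hΓ' h'.allTF.2 hTF hTF hA h'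
    (h.weakening hΓ ((Multiset.cons_le_cons_iff A).2 hΔ) hΓ' (.cons hTF h'.allTF.2))

theorem DerivR.congr_left (hAA' : E A A') (hA : TF A) (h : DerivR E TF TT (A' ::ₘ Γ) Δ) :
    DerivR E TF TT (A ::ₘ Γ) Δ :=
  have hA' : TF A' := h.allTF.1 A' (Multiset.mem_cons_self A' Γ)
  .contrL (.cons hA h.allTF.1.tail) h.allTF.2 hA' hA' hAA' hAA'
    (.weakL (.cons hA' h.allTF.1) h.allTF.2 h)

theorem DerivR.congr_right (hAA' : E A A') (hA : TF A) (h : DerivR E TF TT Γ (A' ::ₘ Δ)) :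
    DerivR E TF TT Γ (A ::ₘ Δ) :=
  have hA' : TF A' := h.allTF.2 A' (Multiset.mem_cons_self A' Δ)
  .contrR h.allTF.1 (.cons hA h.allTF.2.tail) hA' hA' hAA' hAA'
    (.weakR h.allTF.1 (.cons hA' h.allTF.2) h)

theorem ETm.finite_fvs (t : ETm S) : t.fvs.Finite := by
  induction t with
  | evar x => exact Set.finite_singleton x
  | fa _ _ _ ih => exact Set.finite_iUnion ih
  | sub _ _ iht ihs | cons _ _ iht ihs | comp _ _ iht ihs => exact iht.union ihs
  | qvar | idx | eid | up => exact Set.finite_empty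

theorem EFm.finite_fvs (A : EFm S) : A.fvs.Finite := by
  induction A with
  | atom P a => exact Set.finite_iUnion fun i => (a i).finite_fvs
  | bot => exact Set.finite_empty
  | imp _ _ ihA ihB | conj _ _ ihA ihB | disj _ _ ihA ihB => exact ihA.union ihB
  | all _ _ ih | ex _ _ ih => exact ih

theorem finite_mFvE (Γ : Multiset (EFm S)) : (mFvE Γ).Finite := by
  refine (Γ.finite_toSet.biUnion fun A _ => A.finite_fvs).subset ?_
  rintro x ⟨A, hA, hx⟩
  exact Set.mem_biUnion hA hx

theorem exists_fresh (Γ Δ : Multiset (EFm S)) (A : EFm S) :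
    ∃ x, x ∉ mFvE Γ ∧ x ∉ mFvE Δ ∧ x ∉ A.fvs := by
  obtain ⟨x, hx⟩ :=
    (((finite_mFvE Γ).union (finite_mFvE Δ)).union A.finite_fvs).exists_notMem
  rw [Set.mem_union, Set.mem_union, not_or, not_or, and_assoc] at hx
  exact ⟨x, hx⟩

end Structural

section FProvability

theorem FProp.imp {A B : EFm S} (hA : FProp A) (hB : FProp B) : FProp (.imp A B) :=
  ⟨⟨hA.1, hB.1⟩, ⟨hA.2.1, hB.2.1⟩, hA.2.2, hB.2.2⟩

theorem FProp.conj {A B : EFm S} (hA : FProp A) (hB : FProp B) : FProp (.conj A B) :=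
  ⟨⟨hA.1, hB.1⟩, ⟨hA.2.1, hB.2.1⟩, hA.2.2, hB.2.2⟩

theorem FProp.disj {A B : EFm S} (hA : FProp A) (hB : FProp B) : FProp (.disj A B) :=
  ⟨⟨hA.1, hB.1⟩, ⟨hA.2.1, hB.2.1⟩, hA.2.2, hB.2.2⟩

theorem fProp_bot : FProp (.bot : EFm S) := ⟨trivial, trivial, trivial⟩

theorem EFm.fProp_nf {A : EFm S} (hs : EFmSorted [] A) (hv : A.vars0F) : FProp A.nf :=
  (isNormal_nf (m := 0) hs hv).fProp

theorem FProp.conv_nf {A : EFm S} (hA : FProp A) : FConv A A.nf :=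
  EFm.conv_nf (m := 0) hA.2.2 hA.2.1

theorem nf_openF_congr {A A' : EFm S} (h : FConv A A') (t : ETm S) (k : ℕ) :
    (EFm.openF t k A).nf = (EFm.openF t k A').nf := by
  induction h generalizing k with
  | atom h => simp only [EFm.openF, EFm.nf, ETm.sem, ETm.den_openE, fun i => (h i).den_eq]
  | bot => rfl
  | imp _ _ ihA ihB | conj _ _ ihA ihB | disj _ _ ihA ihB => simp only [EFm.openF, EFm.nf, ihA, ihB]
  | all _ ih | ex _ ih => simp only [EFm.openF, EFm.nf, ih]

variable {A B : EFm S}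

theorem EFm.openF_sorted (hs : EFmSorted [.tm 0] A) {t : ETm S} (ht : FTerm0 t) :
    EFmSorted [] (EFm.openF t 0 A) := EFmSorted.openF (Θ := []) hs ht.2.2

theorem EFm.fProp_nf_openF (hs : EFmSorted [.tm 0] A) (hv : A.vars0F) {t : ETm S} (ht : FTerm0 t) :
    FProp (EFm.openF t 0 A).nf :=
  fProp_nf (openF_sorted hs ht) (vars0F_openF hv ht.2.1 0)

theorem EFm.fProp_all_nf (hs : EFmSorted [.tm 0] A) (hv : A.vars0F) :
    FProp (.all (.tm 0) A.nf) := fProp_nf (A := .all (.tm 0) A) hs ⟨rfl, hv⟩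

theorem EFm.fProp_ex_nf (hs : EFmSorted [.tm 0] A) (hv : A.vars0F) :
    FProp (.ex (.tm 0) A.nf) := fProp_nf (A := .ex (.tm 0) A) hs ⟨rfl, hv⟩

theorem EFm.conv_nf_openF (hs : EFmSorted [.tm 0] A) (hv : A.vars0F) {t : ETm S} (ht : FTerm0 t) :
    FConv (EFm.openF t 0 A).nf (EFm.openF t 0 A) :=
  (conv_nf (m := 0) (openF_sorted hs ht) (vars0F_openF hv ht.2.1 0)).symm

theorem EFm.fProp_openF_evar_nf (hs : EFmSorted [.tm 0] A) (hv : A.vars0F) (x : ℕ) :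
    FProp (EFm.openF (.evar x (.tm 0)) 0 A.nf) :=
  ((isNormal_nf (m := 1) hs hv).openF_evar x).fProp

theorem EFm.openF_evar_nf_conv (hs : EFmSorted [.tm 0] A) (hv : A.vars0F) (x : ℕ) :
    FConv (EFm.openF (.evar x (.tm 0)) 0 A.nf) (EFm.openF (.evar x (.tm 0)) 0 A).nf := by
  rw [nf_openF_congr (conv_nf (m := 1) hs hv)]
  exact (fProp_openF_evar_nf hs hv x).conv_nf

theorem fTerm0_evar (x : ℕ) : FTerm0 (.evar x (.tm 0) : ETm S) :=
  ⟨by rintro u ⟨⟩, rfl, .evar⟩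

/-- The forcing conditions: sequents of F-propositions without a proof by F-propositions and
F-terms. -/
structure Cond (S : BSig) where
  ant : Multiset (EFm S)
  suc : Multiset (EFm S)
  allTF_ant : AllTF FProp ant
  allTF_suc : AllTF FProp suc
  not_deriv : ¬ DerivR FConv FProp FTerm0 ant suc

/-- A condition is stronger, hence smaller, when its sequent is larger. -/
instance : Preorder (Cond S) :=
  Preorder.lift fun p => OrderDual.toDual (p.ant, p.suc)

/-- Adding `A` to the succedent of `p` makes it provable. -/
def Cond.Proves (p : Cond S) (A : EFm S) : Prop := DerivR FConv FProp FTerm0 p.ant (A ::ₘ p.suc)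

/-- Adding `A` to the antecedent of `p` makes it provable. -/
def Cond.Refutes (p : Cond S) (A : EFm S) : Prop := DerivR FConv FProp FTerm0 (A ::ₘ p.ant) p.suc

namespace Cond

variable {p q : Cond S}

theorem Proves.mono (h : p.Proves A) (hqp : q ≤ p) : q.Proves A :=
  h.weakening hqp.1 ((Multiset.cons_le_cons_iff A).2 hqp.2) q.allTF_ant
    (.cons (h.allTF.2 A (Multiset.mem_cons_self A _)) q.allTF_suc)

theorem Refutes.mono (h : p.Refutes A) (hqp : q ≤ p) : q.Refutes A :=
  h.weakening ((Multiset.cons_le_cons_iff A).2 hqp.1) hqp.2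
    (.cons (h.allTF.1 A (Multiset.mem_cons_self A _)) q.allTF_ant) q.allTF_suc

theorem Proves.not_refutes (h : p.Proves A) : ¬ p.Refutes A := fun h' =>
  p.not_deriv (h.cut_right (.refl A) le_rfl le_rfl h')

theorem exists_refutes_of_not_proves (hA : FProp A) (h : ¬ p.Proves A) :
    ∃ q ≤ p, q.Refutes A := by
  refine ⟨⟨p.ant, A ::ₘ p.suc, p.allTF_ant, .cons hA p.allTF_suc, h⟩,
    ⟨le_rfl, Multiset.le_cons_self _ _⟩, ?_⟩
  exact .identity (.refl A) (.cons hA p.allTF_ant) (.cons hA p.allTF_suc)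
    (Multiset.mem_cons_self _ _) (Multiset.mem_cons_self _ _)

theorem exists_proves_of_not_refutes (hA : FProp A) (h : ¬ p.Refutes A) :
    ∃ q ≤ p, q.Proves A := by
  refine ⟨⟨A ::ₘ p.ant, p.suc, .cons hA p.allTF_ant, p.allTF_suc, h⟩,
    ⟨Multiset.le_cons_self _ _, le_rfl⟩, ?_⟩
  exact .identity (.refl A) (.cons hA p.allTF_ant) (.cons hA p.allTF_suc)
    (Multiset.mem_cons_self _ _) (Multiset.mem_cons_self _ _)

theorem proves_conj_iff (hA : FProp A) (hB : FProp B) :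
    p.Proves (.conj A B) ↔ p.Proves A ∧ p.Proves B := by
  have hAB := hA.conj hB
  have hmem : ∀ {C : EFm S}, C ∈ A ::ₘ B ::ₘ p.ant → FProp C →
      DerivR FConv FProp FTerm0 (EFm.conj A B ::ₘ p.ant) (C ::ₘ p.suc) := fun hC hCF =>
    .conjL (.cons hAB p.allTF_ant) (.cons hCF p.allTF_suc) hA hB (.refl _)
      (.identity (.refl _) (.cons hA (.cons hB p.allTF_ant)) (.cons hCF p.allTF_suc) hC
        (Multiset.mem_cons_self _ _))
  refine ⟨fun h => ⟨?_, ?_⟩, fun h => ?_⟩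
  · exact h.cut_right (.refl _) le_rfl (Multiset.le_cons_self _ _) (hmem (by simp) hA)
  · exact h.cut_right (.refl _) le_rfl (Multiset.le_cons_self _ _) (hmem (by simp) hB)
  · exact .conjR p.allTF_ant (.cons hAB p.allTF_suc) hA hB (.refl _) h.1 h.2

theorem refutes_disj_iff (hA : FProp A) (hB : FProp B) :
    p.Refutes (.disj A B) ↔ p.Refutes A ∧ p.Refutes B := by
  have hAB := hA.disj hB
  have hmem : ∀ {C : EFm S}, C ∈ A ::ₘ B ::ₘ p.suc → FProp C →
      DerivR FConv FProp FTerm0 (C ::ₘ p.ant) (EFm.disj A B ::ₘ p.suc) := fun hC hCF =>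
    .disjR (.cons hCF p.allTF_ant) (.cons hAB p.allTF_suc) hA hB (.refl _)
      (.identity (.refl _) (.cons hCF p.allTF_ant) (.cons hA (.cons hB p.allTF_suc))
        (Multiset.mem_cons_self _ _) hC)
  refine ⟨fun h => ⟨?_, ?_⟩, fun h => ?_⟩
  · exact h.cut_left (.refl _) (Multiset.le_cons_self _ _) le_rfl (hmem (by simp) hA)
  · exact h.cut_left (.refl _) (Multiset.le_cons_self _ _) le_rfl (hmem (by simp) hB)
  · exact .disjL (.cons hAB p.allTF_ant) p.allTF_suc hA hB (.refl _) h.1 h.2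

theorem refutes_imp_iff (hA : FProp A) (hB : FProp B) :
    p.Refutes (.imp A B) ↔ p.Proves A ∧ p.Refutes B := by
  have hAB := hA.imp hB
  have himp : ∀ {Γ Δ : Multiset (EFm S)}, AllTF FProp Γ → AllTF FProp Δ → A ∈ Δ ∨ B ∈ Γ →
      DerivR FConv FProp FTerm0 Γ (EFm.imp A B ::ₘ Δ) := fun hΓ hΔ h =>
    .impR hΓ (.cons hAB hΔ) hA hB (.refl _) <| h.elim
      (fun h => .identity (.refl A) (.cons hA hΓ) (.cons hB hΔ) (Multiset.mem_cons_self _ _)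
        (Multiset.mem_cons_of_mem h))
      (fun h => .identity (.refl B) (.cons hA hΓ) (.cons hB hΔ) (Multiset.mem_cons_of_mem h)
        (Multiset.mem_cons_self _ _))
  refine ⟨fun h => ⟨?_, ?_⟩, fun h => ?_⟩
  · exact h.cut_left (.refl _) le_rfl (Multiset.le_cons_self _ _)
      (himp p.allTF_ant (.cons hA p.allTF_suc) (.inl (Multiset.mem_cons_self _ _)))
  · exact h.cut_left (.refl _) (Multiset.le_cons_self _ _) le_rfl
      (himp (.cons hB p.allTF_ant) p.allTF_suc (.inr (Multiset.mem_cons_self _ _)))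
  · exact .impL (.cons hAB p.allTF_ant) p.allTF_suc hA hB (.refl _) h.1 h.2

theorem not_proves_bot : ¬ p.Proves .bot := fun h =>
  h.not_refutes (.botL (.cons fProp_bot p.allTF_ant) p.allTF_suc .bot)

theorem proves_all_iff (hs : EFmSorted [.tm 0] A) (hv : A.vars0F) :
    p.Proves (.all (.tm 0) A.nf) ↔ ∀ t, FTerm0 t → p.Proves (EFm.openF t 0 A).nf := by
  have hall := EFm.fProp_all_nf hs hv
  have hall_conv : FConv (.all (.tm 0) A.nf) (.all (.tm 0) A) :=
    .all (EFm.conv_nf (m := 1) hs hv).symm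
  constructor
  · intro h t ht
    have hC := EFm.fProp_nf_openF hs hv ht
    exact h.cut_right (.refl _) le_rfl (Multiset.le_cons_self _ _)
      (.allL (.cons hall p.allTF_ant) (.cons hC p.allTF_suc) hC ht hall_conv
        (EFm.conv_nf_openF hs hv ht) ht.2.2
        (.identity (.refl _) (.cons hC p.allTF_ant) (.cons hC p.allTF_suc)
          (Multiset.mem_cons_self _ _) (Multiset.mem_cons_self _ _)))
  · intro h
    obtain ⟨x, hxΓ, hxΔ, hxA⟩ := exists_fresh p.ant p.suc A.nf
    have hx := EFm.fProp_openF_evar_nf hs hv x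
    exact .allR p.allTF_ant (.cons hall p.allTF_suc) hx (.refl _) hxΓ hxΔ hxA
      (.congr_right (EFm.openF_evar_nf_conv hs hv x) hx (h _ (fTerm0_evar x)))

theorem refutes_ex_iff (hs : EFmSorted [.tm 0] A) (hv : A.vars0F) :
    p.Refutes (.ex (.tm 0) A.nf) ↔ ∀ t, FTerm0 t → p.Refutes (EFm.openF t 0 A).nf := by
  have hex := EFm.fProp_ex_nf hs hv
  have hex_conv : FConv (.ex (.tm 0) A.nf) (.ex (.tm 0) A) :=
    .ex (EFm.conv_nf (m := 1) hs hv).symm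
  constructor
  · intro h t ht
    have hC := EFm.fProp_nf_openF hs hv ht
    exact h.cut_left (.refl _) (Multiset.le_cons_self _ _) le_rfl
      (.exR (.cons hC p.allTF_ant) (.cons hex p.allTF_suc) hC ht hex_conv
        (EFm.conv_nf_openF hs hv ht) ht.2.2
        (.identity (.refl _) (.cons hC p.allTF_ant) (.cons hC p.allTF_suc)
          (Multiset.mem_cons_self _ _) (Multiset.mem_cons_self _ _)))
  · intro h
    obtain ⟨x, hxΓ, hxΔ, hxA⟩ := exists_fresh p.ant p.suc A.nf
    have hx := EFm.fProp_openF_evar_nf hs hv x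
    exact .exL (.cons hex p.allTF_ant) p.allTF_suc hx (.refl _) hxΓ hxΔ hxA
      (.congr_left (EFm.openF_evar_nf_conv hs hv x) hx (h _ (fTerm0_evar x)))

end Cond

end FProvability

section RegularLowerSets

/-- The regular elements of a frame form a complete Boolean algebra, with the meets of the frame. -/
instance regularCompleteBooleanAlgebra {α : Type*} [Order.Frame α] :
    CompleteBooleanAlgebra (Heyting.Regular α) :=
  { Heyting.Regular.instBooleanAlgebra, Heyting.Regular.gi.liftCompleteLattice with }

theorem coe_iInf_regular {α ι : Type*} [Order.Frame α] (f : ι → Heyting.Regular α) :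
    ((⨅ i, f i : Heyting.Regular α) : α) = ⨅ i, (f i : α) :=
  Heyting.Regular.gi.gc.u_iInf

variable {α β : Type*} [Preorder α] {p : α}

theorem mem_compl_lowerSet {a : LowerSet α} : p ∈ aᶜ ↔ ∀ q ≤ p, q ∉ a := by
  rw [← LowerSet.Iic_le, le_compl_iff_disjoint_right, disjoint_iff_inf_le]
  exact ⟨fun h q hqp hq => h (LowerSet.mem_inf_iff.2 ⟨hqp, hq⟩), fun h q hq => h q hq.1 hq.2⟩

theorem regular_ext {a b : Heyting.Regular (LowerSet α)}
    (h : ∀ p, p ∈ (a : LowerSet α) ↔ p ∈ (b : LowerSet α)) : a = b :=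
  Heyting.Regular.coe_injective (SetLike.ext h)

theorem mem_inf_regular {a b : Heyting.Regular (LowerSet α)} :
    p ∈ (↑(a ⊓ b) : LowerSet α) ↔ p ∈ (a : LowerSet α) ∧ p ∈ (b : LowerSet α) := Iff.rfl

theorem mem_inf_map_regular {f : β → Heyting.Regular (LowerSet α)} {Γ : Multiset β}
    (h : ∀ b ∈ Γ, p ∈ (f b : LowerSet α)) : p ∈ (↑(Γ.map f).inf : LowerSet α) := by
  induction Γ using Multiset.induction_on with
  | empty => exact trivial
  | cons b Γ ih =>
    rw [Multiset.map_cons, Multiset.inf_cons]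
    rw [Multiset.forall_mem_cons] at h
    exact mem_inf_regular.2 ⟨h.1, ih h.2⟩

theorem mem_compl_sup_map_regular {f : β → Heyting.Regular (LowerSet α)} {Δ : Multiset β}
    (h : ∀ b ∈ Δ, p ∈ (↑(f b)ᶜ : LowerSet α)) : p ∈ (↑(Δ.map f).supᶜ : LowerSet α) := by
  induction Δ using Multiset.induction_on with
  | empty => exact compl_bot (α := Heyting.Regular (LowerSet α)) ▸ trivial
  | cons b Δ ih =>
    rw [Multiset.map_cons, Multiset.sup_cons, compl_sup]
    rw [Multiset.forall_mem_cons] at h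
    exact mem_inf_regular.2 ⟨h.1, ih h.2⟩

end RegularLowerSets

section Canonical

/-- The conditions refuting `A`. -/
def refuting (A : EFm S) : LowerSet (Cond S) where
  carrier := {p | p.Refutes A}
  lower' _ _ hqp hp := hp.mono hqp

/-- The truth value of `A` in the canonical model: the conditions none of whose extensions refutes
`A`, that is those proving `A` when `A` is an F-proposition. -/
def truth (A : EFm S) : Heyting.Regular (LowerSet (Cond S)) :=
  ⟨(refuting A)ᶜ, Heyting.isRegular_compl _⟩

variable {A B : EFm S} {p : Cond S}

theorem mem_truth (hA : FProp A) : p ∈ (truth A : LowerSet (Cond S)) ↔ p.Proves A := by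
  refine mem_compl_lowerSet.trans ⟨fun h => ?_, fun h q hqp => (h.mono hqp).not_refutes⟩
  by_contra hA'
  obtain ⟨q, hqp, hq⟩ := Cond.exists_refutes_of_not_proves hA hA'
  exact h q hqp hq

theorem mem_compl_truth (hA : FProp A) :
    p ∈ (↑(truth A)ᶜ : LowerSet (Cond S)) ↔ p.Refutes A := by
  rw [Heyting.Regular.coe_compl, mem_compl_lowerSet]
  simp only [mem_truth hA]
  refine ⟨fun h => ?_, fun h q hqp hq => hq.not_refutes (h.mono hqp)⟩
  by_contra hA'
  obtain ⟨q, hqp, hq⟩ := Cond.exists_proves_of_not_refutes hA hA'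
  exact h q hqp hq

theorem truth_bot : truth (.bot : EFm S) = ⊥ :=
  regular_ext fun p => by
    rw [mem_truth fProp_bot]
    exact iff_of_false Cond.not_proves_bot (LowerSet.notMem_bot)

theorem truth_conj (hA : FProp A) (hB : FProp B) :
    truth (.conj A B) = truth A ⊓ truth B :=
  regular_ext fun p => by
    rw [mem_truth (hA.conj hB), Cond.proves_conj_iff hA hB, ← mem_truth hA, ← mem_truth hB]
    exact mem_inf_regular.symm

theorem truth_disj (hA : FProp A) (hB : FProp B) :
    truth (.disj A B) = truth A ⊔ truth B :=
  compl_injective <| regular_ext fun p => by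
    rw [mem_compl_truth (hA.disj hB), Cond.refutes_disj_iff hA hB, ← mem_compl_truth hA,
      ← mem_compl_truth hB, compl_sup]
    exact mem_inf_regular.symm

theorem truth_imp (hA : FProp A) (hB : FProp B) :
    truth (.imp A B) = truth A ⇨ truth B :=
  compl_injective <| regular_ext fun p => by
    rw [mem_compl_truth (hA.imp hB), Cond.refutes_imp_iff hA hB, ← mem_truth hA,
      ← mem_compl_truth hB, compl_himp, sdiff_eq]
    exact mem_inf_regular.symm

theorem truth_all (hs : EFmSorted [.tm 0] A) (hv : A.vars0F) :
    truth (.all (.tm 0) A.nf) = ⨅ t : {t : ETm S // FTerm0 t}, truth (EFm.openF t.1 0 A).nf :=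
  regular_ext fun p => by
    rw [mem_truth (EFm.fProp_all_nf hs hv), coe_iInf_regular,
      LowerSet.mem_iInf_iff, Cond.proves_all_iff hs hv, Subtype.forall]
    exact forall₂_congr fun t ht => (mem_truth (EFm.fProp_nf_openF hs hv ht)).symm

theorem truth_ex (hs : EFmSorted [.tm 0] A) (hv : A.vars0F) :
    truth (.ex (.tm 0) A.nf) = ⨆ t : {t : ETm S // FTerm0 t}, truth (EFm.openF t.1 0 A).nf :=
  compl_injective <| regular_ext fun p => by
    rw [mem_compl_truth (EFm.fProp_ex_nf hs hv), compl_iSup,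
      coe_iInf_regular, LowerSet.mem_iInf_iff, Cond.refutes_ex_iff hs hv, Subtype.forall]
    exact forall₂_congr fun t ht => (mem_compl_truth (EFm.fProp_nf_openF hs hv ht)).symm

/-- The canonical interpretation of the predicate symbols, sending an atom to its truth value. -/
def canonicalInterp (P : S.Pr) (d : Fin (S.par P).length → Den S) :
    Heyting.Regular (LowerSet (Cond S)) :=
  truth (.atom P fun i => reify ((S.par P).get i) (d i))

theorem EFm.eval_canonicalInterp (A : EFm S) (hs : EFmSorted [] A) (hv : A.vars0F) :
    A.eval canonicalInterp (nameDen S) = truth A.nf := by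
  match A with
  | .atom P a =>
    have hden i := (hs i).den_eq_of_closed (nameDen S) (fun _ => id) (qvarDen S)
    simp only [EFm.eval, EFm.value, canonicalInterp, EFm.nf, hden]
  | .bot => exact truth_bot.symm
  | .imp A B =>
    rw [EFm.nf, truth_imp (EFm.fProp_nf hs.1 hv.1) (EFm.fProp_nf hs.2 hv.2)]
    exact congrArg₂ _ (EFm.eval_canonicalInterp A hs.1 hv.1) (EFm.eval_canonicalInterp B hs.2 hv.2)
  | .conj A B =>
    rw [EFm.nf, truth_conj (EFm.fProp_nf hs.1 hv.1) (EFm.fProp_nf hs.2 hv.2)]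
    exact congrArg₂ _ (EFm.eval_canonicalInterp A hs.1 hv.1) (EFm.eval_canonicalInterp B hs.2 hv.2)
  | .disj A B =>
    rw [EFm.nf, truth_disj (EFm.fProp_nf hs.1 hv.1) (EFm.fProp_nf hs.2 hv.2)]
    exact congrArg₂ _ (EFm.eval_canonicalInterp A hs.1 hv.1) (EFm.eval_canonicalInterp B hs.2 hv.2)
  | .all s A =>
    obtain ⟨rfl, hv⟩ := hv
    rw [EFm.nf, truth_all hs hv, EFm.eval, EFm.value, carrier_tm_zero, iInf_range]
    refine iInf_congr fun t => ?_
    rw [← EFm.eval_canonicalInterp _ (EFm.openF_sorted hs t.2) (vars0F_openF hv t.2.2.1 0),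
      EFm.eval_openF t.2.2.2, t.2.2.2.den_eq_of_closed (nameDen S) _ (qvarDen S)]
  | .ex s A =>
    obtain ⟨rfl, hv⟩ := hv
    rw [EFm.nf, truth_ex hs hv, EFm.eval, EFm.value, carrier_tm_zero, iSup_range]
    refine iSup_congr fun t => ?_
    rw [← EFm.eval_canonicalInterp _ (EFm.openF_sorted hs t.2) (vars0F_openF hv t.2.2.1 0),
      EFm.eval_openF t.2.2.2, t.2.2.2.den_eq_of_closed (nameDen S) _ (qvarDen S)]
termination_by A.size
decreasing_by all_goals simp only [EFm.size, EFm.size_openF]; omega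

theorem FProp.eval_canonicalInterp (hA : FProp A) :
    A.eval canonicalInterp (nameDen S) = truth A := by
  rw [EFm.eval_canonicalInterp A hA.2.2 hA.2.1]
  have hnf := EFm.fProp_nf hA.2.2 hA.2.1
  refine regular_ext fun p => ?_
  rw [mem_truth hA, mem_truth hnf]
  exact ⟨.congr_right hA.conv_nf hA, .congr_right hA.conv_nf.symm hnf⟩

theorem Cond.not_valid (p : Cond S) : ¬ Valid canonicalInterp p.ant p.suc := fun h => by
  refine mem_compl_lowerSet.1 (mem_compl_sup_map_regular fun A hA => ?_) p le_rfl
    (h (nameDen S) nameDen_mem_carrier (mem_inf_map_regular fun A hA => ?_))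
  · have hFA := p.allTF_suc A hA
    rw [hFA.eval_canonicalInterp, mem_compl_truth hFA]
    exact .identity (.refl A) (.cons hFA p.allTF_ant) p.allTF_suc (Multiset.mem_cons_self A _) hA
  · have hFA := p.allTF_ant A hA
    rw [hFA.eval_canonicalInterp, mem_truth hFA]
    exact .identity (.refl A) p.allTF_ant (.cons hFA p.allTF_suc) hA (Multiset.mem_cons_self A _)

end Canonical

/-- **Proposition (key).**  Let `Γ ⊢ Δ` be a sequent of `L'` containing only
F-propositions.  If it has a proof in sequent calculus modulo the congruence generated
by `σ`, then it has a proof in which all propositions occurring are F-propositions and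
all quantifier witnesses are F-terms of sort `0`. -/
theorem key_F_proof (S : BSig) (Γ Δ : Multiset (EFm S))
    (hΓ : ∀ A ∈ Γ, FProp A) (hΔ : ∀ B ∈ Δ, FProp B)
    (h : DerivMod FConv Γ Δ) :
    DerivR FConv FProp FTerm0 Γ Δ := by
  obtain ⟨n, h⟩ := h
  by_contra hnot
  exact Cond.not_valid ⟨Γ, Δ, hΓ, hΔ, hnot⟩ h.valid
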